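/- arXiv:1411.0510 — 2 statements merged into one kernel-verified Lean document; each statement's English description precedes it below -/
import Mathlib

section
/- For reduced words u and v, u is left-absorbed by v if and only if the non-splitting reduct [u·v] equals v (up to permutation). -/
variable {V : Type*} [DecidableEq V] [Fintype V]

/-- A letter is a nonempty connected subset of the graph `G`
(connectedness of the induced subgraph includes nonemptiness). -/
def IsLetter (G : SimpleGraph V) (s : Finset V) : Prop :=
  (G.induce (↑s : Set V)).Connected

/-- The type of letters of `G`. -/
def Letter (G : SimpleGraph V) := {s : Finset V // IsLetter G s}

/-- A word is a finite sequence of letters. -/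
abbrev Word (G : SimpleGraph V) := List (Letter G)

/-- Two letters commute iff their union is not a letter (is disconnected). -/
def LCommute (G : SimpleGraph V) (s t : Letter G) : Prop :=
  ¬ IsLetter G (s.1 ∪ t.1)

/-- Two words commute if their letters pairwise commute. -/
def WCommute (G : SimpleGraph V) (u v : Word G) : Prop :=
  ∀ s ∈ u, ∀ t ∈ v, LCommute G s t

/-- One swap of two adjacent commuting letters. -/
def LSwapStep (G : SimpleGraph V) (w w' : Word G) : Prop :=
  ∃ (a b : Word G) (s t : Letter G), LCommute G s t ∧
    w = a ++ s :: t :: b ∧ w' = a ++ t :: s :: b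

/-- Equivalence (`≈`) of words: sequences of swaps of adjacent commuting letters. -/
def WEquiv (G : SimpleGraph V) : Word G → Word G → Prop :=
  Relation.ReflTransGen (LSwapStep G)

/-- A word is reduced if there is no pair of comparable letters such that the
smaller one commutes with all letters strictly in between. -/
def WIsReduced (G : SimpleGraph V) (w : Word G) : Prop :=
  ¬ ∃ (a b c : Word G) (s t : Letter G),
      w = a ++ s :: (b ++ t :: c) ∧
      ((s.1 ⊆ t.1 ∧ ∀ r ∈ b, LCommute G s r) ∨
       (t.1 ⊆ s.1 ∧ ∀ r ∈ b, LCommute G t r))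

/-- A splitting of a letter `s`: a (possibly empty) word whose letters are
proper subsets of `s`. -/
def IsSplitting (G : SimpleGraph V) (x : Word G) (s : Letter G) : Prop :=
  ∀ t ∈ x, t.1 ⊂ s.1

/-- `SplitStep G u v`: `u` is obtained from `v` by replacing one occurrence of a
letter by a splitting of it. -/
def SplitStep (G : SimpleGraph V) (u v : Word G) : Prop :=
  ∃ (a b x : Word G) (s : Letter G),
    v = a ++ s :: b ∧ IsSplitting G x s ∧ u = a ++ x ++ b

/-- One step of the splitting order up to equivalence. -/
def PrecStep (G : SimpleGraph V) (u v : Word G) : Prop :=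
  ∃ u' v', WEquiv G v v' ∧ SplitStep G u' v' ∧ WEquiv G u u'

/-- The splitting order `≺` on words. -/
def WPrec (G : SimpleGraph V) : Word G → Word G → Prop :=
  Relation.TransGen (PrecStep G)

/-- `u ≼ v` : `u ≺ v` or `u ≈ v`. -/
def WPreceq (G : SimpleGraph V) (u v : Word G) : Prop :=
  WPrec G u v ∨ WEquiv G u v

/-- Absorption: if `s ⊆ t`, replace a subword `s·t` (or `t·s`) by `t`. -/
def AbsorbStep (G : SimpleGraph V) (w w' : Word G) : Prop :=
  ∃ (a b : Word G) (s t : Letter G), s.1 ⊆ t.1 ∧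
    (w = a ++ s :: t :: b ∨ w = a ++ t :: s :: b) ∧ w' = a ++ t :: b

/-- A non-splitting reduction step: Commutation or Absorption. -/
def NSStep (G : SimpleGraph V) (w w' : Word G) : Prop :=
  LSwapStep G w w' ∨ AbsorbStep G w w'

/-- `NSRed G u v`: `v` is a non-splitting reduction of `u`, i.e. a reduced word
obtained from `u` by Commutation and Absorption steps only. -/
def NSRed (G : SimpleGraph V) (u v : Word G) : Prop :=
  Relation.ReflTransGen (NSStep G) u v ∧ WIsReduced G v

/-- The letter `t` is left-absorbed by the word `w`: `t` is contained in some
letter of `w` and commutes with all earlier letters. -/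
def LetterLeftAbsorbed (G : SimpleGraph V) (t : Letter G) (w : Word G) : Prop :=
  ∃ (a b : Word G) (s : Letter G), w = a ++ s :: b ∧ t.1 ⊆ s.1 ∧ ∀ r ∈ a, LCommute G t r

/-- The letter `t` is right-absorbed by the word `w`. -/
def LetterRightAbsorbed (G : SimpleGraph V) (t : Letter G) (w : Word G) : Prop :=
  ∃ (a b : Word G) (s : Letter G), w = a ++ s :: b ∧ t.1 ⊆ s.1 ∧ ∀ r ∈ b, LCommute G t r

/-- The letter `t` is properly left-absorbed by the word `w`. -/
def LetterProperLeftAbsorbed (G : SimpleGraph V) (t : Letter G) (w : Word G) : Prop :=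
  ∃ (a b : Word G) (s : Letter G), w = a ++ s :: b ∧ t.1 ⊂ s.1 ∧ ∀ r ∈ a, LCommute G t r

/-- The letter `t` is properly right-absorbed by the word `w`. -/
def LetterProperRightAbsorbed (G : SimpleGraph V) (t : Letter G) (w : Word G) : Prop :=
  ∃ (a b : Word G) (s : Letter G), w = a ++ s :: b ∧ t.1 ⊂ s.1 ∧ ∀ r ∈ b, LCommute G t r

/-- A word `u` is left-absorbed by `w` if each of its letters is. -/
def LeftAbsorbed (G : SimpleGraph V) (u w : Word G) : Prop :=
  ∀ t ∈ u, LetterLeftAbsorbed G t w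

/-- A word `u` is right-absorbed by `w` if each of its letters is. -/
def RightAbsorbed (G : SimpleGraph V) (u w : Word G) : Prop :=
  ∀ t ∈ u, LetterRightAbsorbed G t w

/-- A word `u` is properly left-absorbed by `w` if each of its letters is. -/
def ProperLeftAbsorbed (G : SimpleGraph V) (u w : Word G) : Prop :=
  ∀ t ∈ u, LetterProperLeftAbsorbed G t w

/-- A word `u` is properly right-absorbed by `w` if each of its letters is. -/
def ProperRightAbsorbed (G : SimpleGraph V) (u w : Word G) : Prop :=
  ∀ t ∈ u, LetterProperRightAbsorbed G t w

/-- A commuting word: its letters pairwise commute. -/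
def IsCommuting (G : SimpleGraph V) (u : Word G) : Prop :=
  List.Pairwise (LCommute G) u

/-- The letter `s` is an end of the word `u` if `u ≈ v·s` for some `v`. -/
def IsEnd (G : SimpleGraph V) (s : Letter G) (u : Word G) : Prop :=
  ∃ v, WEquiv G u (v ++ [s])

/-- `t` is the final segment of `u`: the commuting word consisting of all ends of `u`. -/
def IsFinalSegment (G : SimpleGraph V) (t u : Word G) : Prop :=
  IsCommuting G t ∧ ∀ s, s ∈ t ↔ IsEnd G s u

section Auxiliary

variable {G : SimpleGraph V}

/-! ### Commutation of letters -/

theorem Letter.nonempty (s : Letter G) : s.1.Nonempty := by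
  obtain ⟨x⟩ := s.2.nonempty
  exact ⟨x.1, x.2⟩

theorem LCommute.symm {s t : Letter G} (h : LCommute G s t) : LCommute G t s := by
  unfold LCommute at *
  rwa [Finset.union_comm]

theorem LCommute.mono_left {r s t : Letter G} (hrs : r.1 ⊆ s.1) (h : LCommute G s t) :
    LCommute G r t := by
  intro hrt
  apply h
  obtain ⟨x, hx⟩ := r.nonempty
  have key := SimpleGraph.induce_union_connected (G := G) s.2.preconnected hrt.preconnected
    ⟨x, hrs hx, by simp [hx]⟩
  have hU : (↑s.1 ∪ ↑(r.1 ∪ t.1) : Set V) = ↑(s.1 ∪ t.1) := by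
    rw [← Finset.coe_union, ← Finset.union_assoc, Finset.union_eq_left.2 hrs]
  rw [hU] at key
  exact key

theorem LCommute.mono {r s t q : Letter G} (hrs : r.1 ⊆ s.1) (hqt : q.1 ⊆ t.1)
    (h : LCommute G s t) : LCommute G r q :=
  ((h.mono_left hrs).symm.mono_left hqt).symm

theorem LCommute.not_subset {s t : Letter G} (h : LCommute G s t) : ¬ s.1 ⊆ t.1 := by
  intro hst
  apply h
  rw [Finset.union_eq_right.2 hst]
  exact t.2

/-! ### Equivalence of words -/

theorem WEquiv.append_left (x : Word G) {w w' : Word G} (h : WEquiv G w w') :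
    WEquiv G (x ++ w) (x ++ w') := by
  refine Relation.ReflTransGen.lift (x ++ ·) ?_ _ _ h
  rintro _ _ ⟨a, b, s, t, hst, rfl, rfl⟩
  exact ⟨x ++ a, b, s, t, hst, by simp, by simp⟩

theorem WEquiv.perm {w w' : Word G} (h : WEquiv G w w') : w.Perm w' := by
  induction h with
  | refl => exact .refl _
  | tail _ h ih =>
    obtain ⟨a, b, s, t, -, rfl, rfl⟩ := h
    exact ih.trans (.append_left a (.swap t s b))

theorem wEquiv_letter_append (s : Letter G) (x z : Word G) (h : ∀ r ∈ x, LCommute G s r) :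
    WEquiv G (s :: (x ++ z)) (x ++ s :: z) := by
  induction x with
  | nil => exact .refl
  | cons r x ih =>
    simp only [List.mem_cons, forall_eq_or_imp] at h
    exact .head ⟨[], x ++ z, s, r, h.1, rfl, rfl⟩ ((ih h.2).append_left [r])

theorem WCommute.wEquiv_append {x y : Word G} (h : WCommute G x y) (z : Word G) :
    WEquiv G (x ++ (y ++ z)) (y ++ (x ++ z)) := by
  induction x with
  | nil => exact .refl
  | cons s x ih =>
    exact ((ih fun r hr => h r (by simp [hr])).append_left [s]).trans
      (wEquiv_letter_append s y (x ++ z) (h s (by simp)))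

/-! ### Left absorption -/

theorem not_letterLeftAbsorbed_nil (t : Letter G) : ¬ LetterLeftAbsorbed G t [] := by
  rintro ⟨a, b, s, h, -⟩
  simp at h

theorem letterLeftAbsorbed_cons {t s : Letter G} {w : Word G} :
    LetterLeftAbsorbed G t (s :: w) ↔
      t.1 ⊆ s.1 ∨ (LCommute G t s ∧ LetterLeftAbsorbed G t w) := by
  constructor
  · rintro ⟨_ | ⟨q, a⟩, b, r, h, hr, ha⟩
    · obtain ⟨rfl, rfl⟩ := List.cons.inj h
      exact .inl hr
    · obtain ⟨rfl, rfl⟩ := List.cons.inj h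
      simp only [List.mem_cons, forall_eq_or_imp] at ha
      exact .inr ⟨ha.1, a, b, r, rfl, hr, ha.2⟩
  · rintro (h | ⟨h, a, b, r, rfl, hr, ha⟩)
    · exact ⟨[], w, s, rfl, h, by simp⟩
    · exact ⟨s :: a, b, r, rfl, hr, by simpa using ⟨h, ha⟩⟩

theorem LetterLeftAbsorbed.append_right {t : Letter G} {w : Word G}
    (h : LetterLeftAbsorbed G t w) (z : Word G) : LetterLeftAbsorbed G t (w ++ z) := by
  obtain ⟨a, b, s, rfl, hs, ha⟩ := h
  exact ⟨a, b ++ z, s, by simp, hs, ha⟩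

theorem LetterLeftAbsorbed.of_swap {t : Letter G} {w w' : Word G}
    (h : LetterLeftAbsorbed G t w) (hw : LSwapStep G w w') : LetterLeftAbsorbed G t w' := by
  obtain ⟨a, b, p, q, hpq, rfl, rfl⟩ := hw
  induction a with
  | nil =>
    simp only [List.nil_append, letterLeftAbsorbed_cons] at h ⊢
    rcases h with h | ⟨h, h' | h'⟩
    · exact .inr ⟨hpq.mono_left h, .inl h⟩
    · exact .inl h'
    · exact .inr ⟨h'.1, .inr ⟨h, h'.2⟩⟩
  | cons r a ih =>
    simp only [List.cons_append, letterLeftAbsorbed_cons] at h ⊢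
    exact h.imp_right (And.imp_right ih)

theorem NSStep.cons (s : Letter G) {w w' : Word G} (h : NSStep G w w') :
    NSStep G (s :: w) (s :: w') := by
  rcases h with ⟨a, b, p, q, hpq, rfl, rfl⟩ | ⟨a, b, p, q, hpq, rfl | rfl, rfl⟩
  · exact .inl ⟨s :: a, b, p, q, hpq, rfl, rfl⟩
  · exact .inr ⟨s :: a, b, p, q, hpq, .inl rfl, rfl⟩
  · exact .inr ⟨s :: a, b, p, q, hpq, .inr rfl, rfl⟩

theorem LetterLeftAbsorbed.reduces {t : Letter G} {v : Word G}
    (h : LetterLeftAbsorbed G t v) : Relation.ReflTransGen (NSStep G) (t :: v) v := by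
  induction v with
  | nil => exact absurd h (not_letterLeftAbsorbed_nil t)
  | cons s v ih =>
    rcases letterLeftAbsorbed_cons.1 h with h | ⟨h, h'⟩
    · exact .single (.inr ⟨[], v, t, s, h, .inl rfl, rfl⟩)
    · exact .head (.inl ⟨[], v, t, s, h, rfl, rfl⟩)
        (Relation.ReflTransGen.lift (s :: ·) (fun _ _ => NSStep.cons s) _ _ (ih h'))

theorem LeftAbsorbed.reduces {u v : Word G} (h : LeftAbsorbed G u v) :
    Relation.ReflTransGen (NSStep G) (u ++ v) v := by
  induction u with
  | nil => exact .refl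
  | cons t u ih =>
    exact (Relation.ReflTransGen.lift (t :: ·) (fun _ _ => NSStep.cons t) _ _
      (ih fun r hr => h r (by simp [hr]))).trans (h t (by simp)).reduces

/-! ### Beginnings of words -/

/-- The letter `r` has an occurrence in the word that commutes with all earlier letters. -/
def IsBeginning (G : SimpleGraph V) (r : Letter G) (w : Word G) : Prop :=
  ∃ a b : Word G, w = a ++ r :: b ∧ ∀ q ∈ a, LCommute G r q

theorem isBeginning_cons {r s : Letter G} {w : Word G} :
    IsBeginning G r (s :: w) ↔ r = s ∨ (LCommute G r s ∧ IsBeginning G r w) := by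
  constructor
  · rintro ⟨_ | ⟨q, a⟩, b, h, ha⟩
    · exact .inl (List.cons.inj h).1.symm
    · obtain ⟨rfl, rfl⟩ := List.cons.inj h
      simp only [List.mem_cons, forall_eq_or_imp] at ha
      exact .inr ⟨ha.1, a, b, rfl, ha.2⟩
  · rintro (rfl | ⟨h, a, b, rfl, ha⟩)
    · exact ⟨[], w, rfl, by simp⟩
    · exact ⟨s :: a, b, rfl, by simpa using ⟨h, ha⟩⟩

theorem IsBeginning.append_right {r : Letter G} {w : Word G} (h : IsBeginning G r w)
    (z : Word G) : IsBeginning G r (w ++ z) := by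
  obtain ⟨a, b, rfl, ha⟩ := h
  exact ⟨a, b ++ z, by simp, ha⟩

theorem IsBeginning.of_swap {r : Letter G} {w w' : Word G}
    (h : IsBeginning G r w) (hw : LSwapStep G w w') : IsBeginning G r w' := by
  obtain ⟨a, b, p, q, hpq, rfl, rfl⟩ := hw
  induction a with
  | nil =>
    simp only [List.nil_append, isBeginning_cons] at h ⊢
    rcases h with rfl | ⟨h, h' | h'⟩
    · exact .inr ⟨hpq, .inl rfl⟩
    · exact .inl h'
    · exact .inr ⟨h'.1, .inr ⟨h, h'.2⟩⟩
  | cons r a ih =>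
    simp only [List.cons_append, isBeginning_cons] at h ⊢
    exact h.imp_right (And.imp_right ih)

/-! ### Words that are almost reduced -/

/-- No letter is absorbed by the letters after it, and a letter can only absorb a later
one if it has at most `k` elements and the absorbed one has fewer than `k`. -/
def AlmostReduced (G : SimpleGraph V) (k : ℕ) : Word G → Prop
  | [] => True
  | s :: w => ¬ LetterLeftAbsorbed G s w ∧
      (∀ r, IsBeginning G r w → r.1 ⊆ s.1 → r.1.card < k ∧ s.1.card ≤ k) ∧
      AlmostReduced G k w

theorem AlmostReduced.of_swap {k : ℕ} {w w' : Word G} (h : AlmostReduced G k w)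
    (hw : LSwapStep G w w') : AlmostReduced G k w' := by
  obtain ⟨a, b, p, q, hpq, rfl, rfl⟩ := hw
  induction a with
  | nil =>
    obtain ⟨h₁, h₂, h₃, h₄, h₅⟩ := h
    simp only [letterLeftAbsorbed_cons, isBeginning_cons] at h₁ h₂
    refine ⟨?_, ?_, fun h => h₁ (.inr ⟨hpq, h⟩), ?_, h₅⟩
    · rw [letterLeftAbsorbed_cons]
      rintro (h | h)
      · exact hpq.symm.not_subset h
      · exact h₃ h.2
    · intro r hr hrq
      rcases isBeginning_cons.1 hr with rfl | h
      · exact absurd hrq hpq.not_subset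
      · exact h₄ r h.2 hrq
    · intro r hr hrp
      exact h₂ r (.inr ⟨hpq.mono_left hrp, hr⟩) hrp
  | cons r a ih =>
    have hswap : LSwapStep G (a ++ q :: p :: b) (a ++ p :: q :: b) :=
      ⟨a, b, q, p, hpq.symm, rfl, rfl⟩
    exact ⟨fun h' => h.1 (h'.of_swap hswap), fun x hx => h.2.1 x (hx.of_swap hswap), ih h.2.2⟩

theorem AlmostReduced.of_wEquiv {k : ℕ} {w w' : Word G} (h : AlmostReduced G k w)
    (hw : WEquiv G w w') : AlmostReduced G k w' := by
  induction hw with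
  | refl => exact h
  | tail _ hs ih => exact ih.of_swap hs

theorem AlmostReduced.of_append {k : ℕ} {x z : Word G} (h : AlmostReduced G k (x ++ z)) :
    AlmostReduced G k x ∧ AlmostReduced G k z := by
  induction x with
  | nil => exact ⟨trivial, h⟩
  | cons s x ih =>
    obtain ⟨h₁, h₂, h₃⟩ := h
    exact ⟨⟨fun h' => h₁ (h'.append_right z), fun r hr => h₂ r (hr.append_right z), (ih h₃).1⟩,
      (ih h₃).2⟩

theorem WIsReduced.almostReduced {w : Word G} (h : WIsReduced G w) (k : ℕ) :
    AlmostReduced G k w := by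
  induction w with
  | nil => trivial
  | cons s w ih =>
    refine ⟨?_, ?_, ih ?_⟩
    · rintro ⟨a, b, t, rfl, hst, ha⟩
      exact h ⟨[], a, b, s, t, rfl, .inl ⟨hst, ha⟩⟩
    · rintro r ⟨a, b, rfl, ha⟩ hrs
      exact absurd ⟨[], a, b, s, r, rfl, .inr ⟨hrs, ha⟩⟩ h
    · rintro ⟨a, b, c, p, q, rfl, hpq⟩
      exact h ⟨s :: a, b, c, p, q, rfl, hpq⟩

theorem WIsReduced.almostReduced_cons {t : Letter G} {v : Word G} (hv : WIsReduced G v)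
    (ht : ¬ LetterLeftAbsorbed G t v) : AlmostReduced G t.1.card (t :: v) := by
  refine ⟨ht, ?_, hv.almostReduced _⟩
  rintro r ⟨a, b, rfl, ha⟩ hrt
  refine ⟨Finset.card_lt_card ⟨hrt, fun htr => ht ⟨a, b, r, rfl, htr, ?_⟩⟩, le_rfl⟩
  intro q hq
  exact (ha q hq).mono_left htr

theorem AlmostReduced.eq_cons_of_mem {k : ℕ} {x : Word G} {s : Letter G}
    (h : AlmostReduced G k x) (hx : ∀ r ∈ x, r.1 ⊆ s.1) (hs : s ∈ x) :
    ∃ x', x = s :: x' ∧ s ∉ x' := by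
  induction x with
  | nil => simp at hs
  | cons q x ih =>
    have hsx : s ∉ x := by
      intro hsx
      obtain ⟨x', rfl, -⟩ := ih h.2.2 (fun r hr => hx r (by simp [hr])) hsx
      exact h.1 (letterLeftAbsorbed_cons.2 (.inl (hx q (by simp))))
    obtain rfl | hs := List.mem_cons.1 hs
    · exact ⟨x, rfl, hsx⟩
    · exact absurd hs hsx

/-! ### Weights -/

/-- The weight `M ^ |s|` of a letter with at least `k` elements; smaller letters weigh nothing. -/
def letterWeight (k M : ℕ) (s : Letter G) : ℕ :=
  if k ≤ s.1.card then M ^ s.1.card else 0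

/-- The total weight of the letters of a word. -/
def wordWeight (k M : ℕ) (w : Word G) : ℕ := (w.map (letterWeight k M)).sum

theorem card_lt_of_subset_of_ne {r s : Letter G} (h : r.1 ⊆ s.1) (hne : r ≠ s) :
    r.1.card < s.1.card :=
  Finset.card_lt_card (h.ssubset_of_ne fun h => hne (Subtype.ext h))

theorem wordWeight_eq_zero {k M : ℕ} {x : Word G} (h : ∀ r ∈ x, r.1.card < k) :
    wordWeight k M x = 0 := by
  refine List.sum_eq_zero fun n hn => ?_
  obtain ⟨r, hr, rfl⟩ := List.mem_map.1 hn
  simp [letterWeight, h r hr]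

theorem AlmostReduced.wordWeight_le {k M : ℕ} {x : Word G} {s : Letter G}
    (h : AlmostReduced G k x) (hx : ∀ r ∈ x, r.1 ⊆ s.1) (hM : 0 < M) (hlen : x.length ≤ M) :
    wordWeight k M x ≤ letterWeight k M s := by
  by_cases hk : k ≤ s.1.card
  swap
  · rw [wordWeight_eq_zero fun r hr => (Finset.card_le_card (hx r hr)).trans_lt (not_le.1 hk)]
    exact Nat.zero_le _
  by_cases hs : s ∈ x
  · obtain ⟨x', rfl, hs'⟩ := h.eq_cons_of_mem hx hs
    have hz : wordWeight k M x' = 0 := by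
      cases x' with
      | nil => rfl
      | cons q x'' =>
        have hq := h.2.1 q (isBeginning_cons.2 (.inl rfl)) (hx q (by simp))
        refine wordWeight_eq_zero fun r hr => ?_
        exact (card_lt_of_subset_of_ne (hx r (List.mem_cons_of_mem _ hr))
          (ne_of_mem_of_not_mem hr hs')).trans_le hq.2
    change letterWeight k M s + wordWeight k M x' ≤ _
    rw [hz, add_zero]
  · have hpos := Finset.card_pos.2 s.nonempty
    have hle : wordWeight k M x ≤ (x.map (letterWeight k M)).length • M ^ (s.1.card - 1) := by
      refine List.sum_le_card_nsmul _ _ fun n hn => ?_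
      obtain ⟨r, hr, rfl⟩ := List.mem_map.1 hn
      have hlt := card_lt_of_subset_of_ne (hx r hr) (ne_of_mem_of_not_mem hr hs)
      unfold letterWeight
      split_ifs
      · exact Nat.pow_le_pow_right hM (by omega)
      · exact Nat.zero_le _
    calc wordWeight k M x ≤ x.length * M ^ (s.1.card - 1) := by simpa using hle
      _ ≤ M * M ^ (s.1.card - 1) := Nat.mul_le_mul_right _ hlen
      _ = letterWeight k M s := by
        rw [letterWeight, if_pos hk, ← pow_succ', Nat.sub_add_cancel hpos]

/-! ### Subwords of splittings -/

/-- `y` arises from `w` by replacing each letter `s` by some word in letters contained in `s`. -/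
def Refines (G : SimpleGraph V) : Word G → Word G → Prop
  | y, [] => y = []
  | y, s :: w => ∃ x z : Word G, y = x ++ z ∧ (∀ r ∈ x, r.1 ⊆ s.1) ∧ Refines G z w

theorem Refines.cons {y w : Word G} (h : Refines G y w) (s : Letter G) :
    Refines G y (s :: w) :=
  ⟨[], y, rfl, by simp, h⟩

theorem Refines.cons_cons {y w : Word G} (h : Refines G y w) (s : Letter G) :
    Refines G (s :: y) (s :: w) :=
  ⟨[s], y, rfl, by simp, h⟩

theorem Refines.refl (w : Word G) : Refines G w w := by
  induction w with
  | nil => rfl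
  | cons s w ih => exact ih.cons_cons s

theorem Refines.append_left {y w : Word G} (h : Refines G y w) (u : Word G) :
    Refines G y (u ++ w) := by
  induction u with
  | nil => exact h
  | cons s u ih => exact ih.cons s

theorem refines_cons_append {t : Letter G} {u : Word G} (ht : t ∈ u) (v : Word G) :
    Refines G (t :: v) (u ++ v) := by
  induction u with
  | nil => simp at ht
  | cons s u ih =>
    obtain rfl | ht := List.mem_cons.1 ht
    · exact ((Refines.refl v).append_left u).cons_cons t
    · exact (ih ht).cons s

theorem Refines.of_append_context {c c' : Word G}
    (hc : ∀ y, Refines G y c → ∃ y', WEquiv G y y' ∧ Refines G y' c') (a : Word G) {y : Word G}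
    (h : Refines G y (a ++ c)) : ∃ y', WEquiv G y y' ∧ Refines G y' (a ++ c') := by
  induction a generalizing y with
  | nil => exact hc y h
  | cons s a ih =>
    obtain ⟨x, z, rfl, hx, hz⟩ := h
    obtain ⟨z', hzz', hz'⟩ := ih hz
    exact ⟨x ++ z', hzz'.append_left x, x, z', rfl, hx, hz'⟩

theorem Refines.of_nsStep {w w' y : Word G} (h : Refines G y w) (hw : NSStep G w w') :
    ∃ y', WEquiv G y y' ∧ Refines G y' w' := by
  rcases hw with ⟨a, b, s, t, hst, rfl, rfl⟩ | ⟨a, b, s, t, hst, rfl | rfl, rfl⟩ <;>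
    refine Refines.of_append_context ?_ a h <;>
    rintro _ ⟨x, _, rfl, hx, x', z, rfl, hx', hz⟩
  · exact ⟨x' ++ (x ++ z),
      WCommute.wEquiv_append (fun r hr q hq => hst.mono (hx r hr) (hx' q hq)) z,
      x', x ++ z, rfl, hx', x, z, rfl, hx, hz⟩
  · refine ⟨_, .refl, x ++ x', z, by simp, fun r hr => ?_, hz⟩
    exact (List.mem_append.1 hr).elim (fun hr => (hx r hr).trans hst) (hx' r)
  · refine ⟨_, .refl, x ++ x', z, by simp, fun r hr => ?_, hz⟩
    exact (List.mem_append.1 hr).elim (hx r) (fun hr => (hx' r hr).trans hst)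

theorem Refines.of_reduces {w w' y : Word G} (h : Refines G y w)
    (hw : Relation.ReflTransGen (NSStep G) w w') : ∃ y', WEquiv G y y' ∧ Refines G y' w' := by
  induction hw with
  | refl => exact ⟨y, .refl, h⟩
  | tail _ hs ih =>
    obtain ⟨y₁, h₁, hr₁⟩ := ih
    obtain ⟨y₂, h₂, hr₂⟩ := hr₁.of_nsStep hs
    exact ⟨y₂, h₁.trans h₂, hr₂⟩

theorem Refines.wordWeight_le {k M : ℕ} {y w : Word G} (h : Refines G y w)
    (hy : AlmostReduced G k y) (hM : 0 < M) (hlen : y.length ≤ M) :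
    wordWeight k M y ≤ wordWeight k M w := by
  induction w generalizing y with
  | nil =>
    obtain rfl : y = [] := h
    exact le_rfl
  | cons s w ih =>
    obtain ⟨x, z, rfl, hx, hz⟩ := h
    rw [List.length_append] at hlen
    have h₁ := hy.of_append.1.wordWeight_le hx hM (by omega)
    have h₂ := ih hz hy.of_append.2 (by omega)
    simpa [wordWeight] using Nat.add_le_add h₁ h₂

/-- A word that reduces, without splitting, from `u ++ v` to the reduced word `v` can only
do so if `v` absorbs each letter of `u`. -/
theorem LeftAbsorbed.of_reduces {u v : Word G} (hv : WIsReduced G v)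
    (h : Relation.ReflTransGen (NSStep G) (u ++ v) v) : LeftAbsorbed G u v := by
  intro t ht
  by_contra hna
  obtain ⟨y, hy, hyv⟩ := (refines_cons_append ht v).of_reduces h
  have hle := hyv.wordWeight_le (k := t.1.card) (M := y.length)
    ((hv.almostReduced_cons hna).of_wEquiv hy)
    (by rw [← hy.perm.length_eq]; simp) le_rfl
  have heq : wordWeight t.1.card y.length y = wordWeight t.1.card y.length (t :: v) :=
    (hy.perm.map _).sum_eq.symm
  have hpos : 0 < y.length ^ t.1.card :=
    Nat.pow_pos (by rw [← hy.perm.length_eq]; simp)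
  rw [heq] at hle
  simp only [wordWeight, letterWeight, List.map_cons, List.sum_cons, le_refl, if_true] at hle
  omega

end Auxiliary

/-- For reduced words `u` and `v`: `u` is left-absorbed by `v` iff `[u·v] = v`
(up to permutation). -/
theorem leftAbsorbed_iff_reduct_eq (G : SimpleGraph V) (u v : Word G)
    (hu : WIsReduced G u) (hv : WIsReduced G v) :
    LeftAbsorbed G u v ↔ ∃ r, NSRed G (u ++ v) r ∧ WEquiv G r v := by
  constructor
  · intro h
    exact ⟨v, ⟨h.reduces, hv⟩, .refl⟩
  · rintro ⟨r, ⟨hr, -⟩, hrv⟩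
    exact .of_reduces hv (hr.trans (Relation.ReflTransGen.mono (fun _ _ => Or.inl) _ _ hrv))
end

section
/- Symmetric Decomposition: Given reduced words u and v, there exist decompositions, unique up to permutation, u ≈ u_1·u'·w and v ≈ w·v'·v_1 such that: w is a commuting word; u' is properly left-absorbed by v_1; v' is properly right-absorbed by u_1; the words u', w, v' pairwise commute; and u_1·w·v_1 is reduced. Moreover the non-splitting reduct satisfies [u·v] ≈ u_1·w·v_1. -/
variable {V : Type*} [DecidableEq V] [Fintype V]

/-- A commutation relation on a partial order: symmetric, irreflexive, and inherited by smaller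
elements. -/
structure IsCommutation {A : Type*} [PartialOrder A] (C : A → A → Prop) : Prop where
  symm : ∀ {s t}, C s t → C t s
  irrefl : ∀ s, ¬ C s s
  mono : ∀ {s t r}, s ≤ t → C t r → C s r

section Trace

variable {A : Type*}

/-- `t` occurs in the list, preceded only by elements commuting with `s`. -/
def Reaches (C : A → A → Prop) (s t : A) : List A → Prop
  | [] => False
  | h :: r => t = h ∨ (C s h ∧ Reaches C s t r)

/-- `s` occurs in the list, preceded only by elements commuting with it. -/
def IsStart (C : A → A → Prop) (s : A) (P : List A) : Prop := Reaches C s s P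

/-- `s` is absorbed by the list from the left. -/
def IsAbsorbed [PartialOrder A] (C : A → A → Prop) (s : A) (P : List A) : Prop :=
  ∃ t, s ≤ t ∧ Reaches C s t P

/-- `s` is properly absorbed by the list from the left. -/
def IsProperlyAbsorbed [PartialOrder A] (C : A → A → Prop) (s : A) (P : List A) : Prop :=
  ∃ t, s < t ∧ Reaches C s t P

/-- No element is absorbed across the interface of `P.reverse ++ Q`. -/
def NoCross [PartialOrder A] (C : A → A → Prop) (P Q : List A) : Prop :=
  (∀ s, IsStart C s P → ¬ IsAbsorbed C s Q) ∧ (∀ s, IsStart C s Q → ¬ IsAbsorbed C s P)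

/-- Reduced lists, recursively. -/
def Reduced [PartialOrder A] (C : A → A → Prop) : List A → Prop
  | [] => True
  | h :: r => Reduced C r ∧ NoCross C [h] r

/-- Equality of lists up to commutation. -/
inductive TraceEq (C : A → A → Prop) : List A → List A → Prop
  | nil : TraceEq C [] []
  | cons (h : A) {P Q : List A} : TraceEq C P Q → TraceEq C (h :: P) (h :: Q)
  | swap {s t : A} (P : List A) : C s t → TraceEq C (s :: t :: P) (t :: s :: P)
  | trans {P Q R : List A} : TraceEq C P Q → TraceEq C Q R → TraceEq C P R

variable {C : A → A → Prop} {s t r : A} {P Q R : List A}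

section Basic

@[simp] theorem not_reaches_nil : ¬ Reaches C s t [] := id

@[simp] theorem reaches_cons {h : A} :
    Reaches C s t (h :: P) ↔ t = h ∨ (C s h ∧ Reaches C s t P) := Iff.rfl

theorem reaches_iff : Reaches C s t P ↔ ∃ a b, P = a ++ t :: b ∧ ∀ r ∈ a, C s r := by
  induction P with
  | nil => simp
  | cons h P ih =>
    rw [reaches_cons, ih]
    constructor
    · rintro (rfl | ⟨hC, a, b, rfl, ha⟩)
      · exact ⟨[], P, rfl, by simp⟩
      · exact ⟨h :: a, b, rfl, by simpa using ⟨hC, ha⟩⟩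
    · rintro ⟨a, b, hP, ha⟩
      cases a with
      | nil => left; simp at hP; exact hP.1.symm
      | cons k a =>
        simp only [List.cons_append, List.cons.injEq] at hP
        obtain ⟨rfl, rfl⟩ := hP
        exact Or.inr ⟨ha _ (by simp), a, b, rfl, fun r hr => ha r (by simp [hr])⟩

theorem reaches_append :
    Reaches C s t (P ++ Q) ↔ Reaches C s t P ∨ ((∀ r ∈ P, C s r) ∧ Reaches C s t Q) := by
  induction P with
  | nil => simp
  | cons h P ih => simp only [List.cons_append, reaches_cons, ih, List.forall_mem_cons]; tauto

@[simp] theorem not_isStart_nil : ¬ IsStart C s [] := id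

@[simp] theorem isStart_cons {h : A} :
    IsStart C s (h :: P) ↔ s = h ∨ (C s h ∧ IsStart C s P) := Iff.rfl

theorem isStart_append :
    IsStart C s (P ++ Q) ↔ IsStart C s P ∨ ((∀ r ∈ P, C s r) ∧ IsStart C s Q) :=
  reaches_append

theorem Reaches.mem (h : Reaches C s t P) : t ∈ P := by
  obtain ⟨a, b, rfl, -⟩ := reaches_iff.1 h
  simp

theorem Reaches.trichotomy {s' t' : A} (h : Reaches C s t P) (h' : Reaches C s' t' P) :
    t = t' ∨ C s t' ∨ C s' t := by
  induction P with
  | nil => exact h.elim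
  | cons k P ih =>
    rcases h with rfl | ⟨hk, h⟩ <;> rcases h' with rfl | ⟨hk', h'⟩
    · exact Or.inl rfl
    · exact Or.inr (Or.inr hk')
    · exact Or.inr (Or.inl hk)
    · exact ih h h'

theorem Reaches.comm_or_mem {q : A} (h : Reaches C q r (P ++ Q)) (hs : s ∈ P) :
    C q s ∨ r ∈ P := by
  rcases reaches_append.1 h with h | h
  · exact Or.inr h.mem
  · exact Or.inl (h.1 s hs)

theorem TraceEq.refl (P : List A) : TraceEq C P P := by
  induction P with
  | nil => exact .nil
  | cons h P ih => exact .cons h ih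

theorem TraceEq.append_left (P : List A) (h : TraceEq C Q R) : TraceEq C (P ++ Q) (P ++ R) := by
  induction P with
  | nil => exact h
  | cons k P ih => exact .cons k ih

theorem TraceEq.append_right (R : List A) (h : TraceEq C P Q) : TraceEq C (P ++ R) (Q ++ R) := by
  induction h with
  | nil => exact .refl R
  | cons k _ ih => exact .cons k ih
  | swap P hC => exact .swap _ hC
  | trans _ _ ih ih' => exact ih.trans ih'

theorem TraceEq.append {P' Q' : List A} (h : TraceEq C P Q) (h' : TraceEq C P' Q') :
    TraceEq C (P ++ P') (Q ++ Q') :=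
  (h.append_right P').trans (h'.append_left Q)

theorem traceEq_cons_append (h : ∀ r ∈ P, C r s) :
    TraceEq C (P ++ s :: Q) (s :: (P ++ Q)) := by
  induction P with
  | nil => exact .refl _
  | cons k P ih =>
    simp only [List.forall_mem_cons] at h
    exact (TraceEq.cons k (ih h.2)).trans (.swap _ h.1)

theorem traceEq_append_comm (h : ∀ r ∈ P, ∀ s ∈ Q, C r s) :
    TraceEq C (P ++ Q) (Q ++ P) := by
  induction Q with
  | nil => simpa using TraceEq.refl P
  | cons k Q ih =>
    simp only [List.forall_mem_cons] at h
    exact (traceEq_cons_append fun r hr => (h r hr).1).trans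
      (.cons k (ih fun r hr => (h r hr).2))

theorem TraceEq.reverse (h : TraceEq C P Q) (hC : ∀ s t, C s t → C t s) :
    TraceEq C P.reverse Q.reverse := by
  induction h with
  | nil => exact .nil
  | cons k _ ih => simpa using ih.append_right [k]
  | @swap a b P hab =>
    simp only [List.reverse_cons, List.append_assoc, List.singleton_append]
    exact (TraceEq.swap [] (hC _ _ hab)).append_left _
  | trans _ _ ih ih' => exact ih.trans ih'

theorem TraceEq.perm (h : TraceEq C P Q) : P.Perm Q := by
  induction h with
  | nil => exact .nil
  | cons k _ ih => exact .cons k ih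
  | swap P hC => exact .swap _ _ P
  | trans _ _ ih ih' => exact ih.trans ih'

theorem TraceEq.filter (p : A → Bool) (h : TraceEq C P Q) :
    TraceEq C (P.filter p) (Q.filter p) := by
  induction h with
  | nil => exact .refl _
  | cons k _ ih =>
    simp only [List.filter_cons]
    split
    · exact .cons k ih
    · exact ih
  | swap P hC =>
    simp only [List.filter_cons]
    split <;> split
    · exact .swap _ hC
    all_goals exact .refl _
  | trans _ _ ih ih' => exact ih.trans ih'

end Basic

variable [PartialOrder A]

theorem IsCommutation.not_le (hC : IsCommutation C) (h : C s t) : ¬ s ≤ t :=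
  fun hle => hC.irrefl s (hC.mono hle (hC.symm h))

theorem IsCommutation.not_ge (hC : IsCommutation C) (h : C s t) : ¬ t ≤ s :=
  hC.not_le (hC.symm h)

theorem IsCommutation.mono_right (hC : IsCommutation C) {t' : A} (hle : t ≤ t') (h : C s t') :
    C s t :=
  hC.symm (hC.mono hle (hC.symm h))

theorem TraceEq.symm (hC : IsCommutation C) (h : TraceEq C P Q) : TraceEq C Q P := by
  induction h with
  | nil => exact .nil
  | cons k _ ih => exact .cons k ih
  | swap P h => exact .swap P (hC.symm h)
  | trans _ _ ih ih' => exact ih'.trans ih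

theorem Reaches.mono (hC : IsCommutation C) (hle : s ≤ t) (h : Reaches C t r P) :
    Reaches C s r P := by
  induction P with
  | nil => exact h
  | cons k P ih =>
    rcases h with rfl | ⟨hk, h⟩
    · exact Or.inl rfl
    · exact Or.inr ⟨hC.mono hle hk, ih h⟩

theorem Reaches.congr (hC : IsCommutation C) (hle : s ≤ t) (h : TraceEq C P Q)
    (hr : Reaches C s t P) : Reaches C s t Q := by
  induction h with
  | nil => exact hr
  | cons k _ ih =>
    rcases hr with rfl | ⟨hk, hr⟩
    · exact Or.inl rfl
    · exact Or.inr ⟨hk, ih hr⟩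
  | @swap a b P hab =>
    simp only [reaches_cons] at hr ⊢
    rcases hr with rfl | ⟨ha, rfl | ⟨hb, hr⟩⟩
    · exact Or.inr ⟨hC.mono hle hab, Or.inl rfl⟩
    · exact Or.inl rfl
    · exact Or.inr ⟨hb, Or.inr ⟨ha, hr⟩⟩
  | trans _ _ ih ih' => exact ih' (ih hr)

theorem IsStart.congr (hC : IsCommutation C) (h : TraceEq C P Q) (hs : IsStart C s P) :
    IsStart C s Q :=
  Reaches.congr hC le_rfl h hs

theorem IsAbsorbed.congr (hC : IsCommutation C) (h : TraceEq C P Q) (hs : IsAbsorbed C s P) :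
    IsAbsorbed C s Q := by
  obtain ⟨t, hle, ht⟩ := hs
  exact ⟨t, hle, ht.congr hC hle h⟩

theorem IsProperlyAbsorbed.congr (hC : IsCommutation C) (h : TraceEq C P Q)
    (hs : IsProperlyAbsorbed C s P) : IsProperlyAbsorbed C s Q := by
  obtain ⟨t, hlt, ht⟩ := hs
  exact ⟨t, hlt, ht.congr hC hlt.le h⟩

theorem IsProperlyAbsorbed.isAbsorbed (h : IsProperlyAbsorbed C s P) : IsAbsorbed C s P := by
  obtain ⟨t, hlt, ht⟩ := h
  exact ⟨t, hlt.le, ht⟩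

theorem IsAbsorbed.mono (hC : IsCommutation C) (hle : s ≤ t) (h : IsAbsorbed C t P) :
    IsAbsorbed C s P := by
  obtain ⟨r, hr, h⟩ := h
  exact ⟨r, hle.trans hr, h.mono hC hle⟩

theorem IsStart.isAbsorbed (h : IsStart C s P) : IsAbsorbed C s P := ⟨s, le_rfl, h⟩

@[simp] theorem not_isAbsorbed_nil : ¬ IsAbsorbed C s [] := fun ⟨_, _, h⟩ => h

@[simp] theorem isAbsorbed_cons {h : A} :
    IsAbsorbed C s (h :: P) ↔ s ≤ h ∨ (C s h ∧ IsAbsorbed C s P) := by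
  constructor
  · rintro ⟨t, hle, rfl | ⟨hk, ht⟩⟩
    · exact Or.inl hle
    · exact Or.inr ⟨hk, t, hle, ht⟩
  · rintro (hle | ⟨hk, t, hle, ht⟩)
    · exact ⟨h, hle, Or.inl rfl⟩
    · exact ⟨t, hle, Or.inr ⟨hk, ht⟩⟩

theorem isAbsorbed_append :
    IsAbsorbed C s (P ++ Q) ↔ IsAbsorbed C s P ∨ ((∀ r ∈ P, C s r) ∧ IsAbsorbed C s Q) := by
  induction P with
  | nil => simp
  | cons h P ih => simp only [List.cons_append, isAbsorbed_cons, ih, List.forall_mem_cons]; tauto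

theorem IsProperlyAbsorbed.append_left (h : IsProperlyAbsorbed C s Q) (hP : ∀ r ∈ P, C s r) :
    IsProperlyAbsorbed C s (P ++ Q) := by
  obtain ⟨t, hlt, ht⟩ := h
  exact ⟨t, hlt, reaches_append.2 (Or.inr ⟨hP, ht⟩)⟩

theorem IsProperlyAbsorbed.of_append (hC : IsCommutation C) (h : IsProperlyAbsorbed C s (P ++ Q))
    (hP : ∀ r ∈ P, C s r) : IsProperlyAbsorbed C s Q := by
  obtain ⟨t, hlt, ht⟩ := h
  rcases reaches_append.1 ht with h | h
  · exact absurd hlt.le (hC.not_le (hP t h.mem))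
  · exact ⟨t, hlt, h.2⟩

/-- Compare an absorbed element with an element at the start. -/
theorem IsStart.le_or_comm (hC : IsCommutation C) (hs : IsStart C s P) (hr : IsAbsorbed C r P) :
    r ≤ s ∨ C r s := by
  obtain ⟨t, hle, ht⟩ := hr
  rcases ht.trichotomy hs with rfl | h | h
  · exact Or.inl hle
  · exact Or.inr h
  · exact Or.inr (hC.mono hle (hC.symm h))

theorem IsStart.not_properlyAbsorbed (hC : IsCommutation C) (hs : IsStart C s P) :
    ¬ IsProperlyAbsorbed C s P := by
  rintro ⟨t, hlt, ht⟩
  rcases ht.trichotomy hs with rfl | h | h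
  · exact lt_irrefl _ hlt
  · exact hC.irrefl _ h
  · exact hC.not_le h hlt.le

theorem IsAbsorbed.properly (h : IsAbsorbed C s P) (hs : ¬ IsStart C s P) :
    IsProperlyAbsorbed C s P := by
  obtain ⟨t, hle, ht⟩ := h
  refine ⟨t, lt_of_le_of_ne hle ?_, ht⟩
  rintro rfl
  exact hs ht

theorem isStart_of_mem_of_pairwise (hC : IsCommutation C) (hP : P.Pairwise C) (hs : s ∈ P) :
    IsStart C s P := by
  induction P with
  | nil => simp at hs
  | cons h P ih =>
    rw [List.pairwise_cons] at hP
    rcases List.mem_cons.1 hs with rfl | hs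
    · exact Or.inl rfl
    · exact Or.inr ⟨hC.symm (hP.1 s hs), ih hP.2 hs⟩

theorem NoCross.symm (h : NoCross C P Q) : NoCross C Q P := ⟨h.2, h.1⟩

theorem NoCross.congr (hC : IsCommutation C) {P' Q' : List A} (hP : TraceEq C P P')
    (hQ : TraceEq C Q Q') (h : NoCross C P Q) : NoCross C P' Q' :=
  ⟨fun s hs hs' => h.1 s (hs.congr hC (hP.symm hC)) (hs'.congr hC (hQ.symm hC)),
    fun s hs hs' => h.2 s (hs.congr hC (hQ.symm hC)) (hs'.congr hC (hP.symm hC))⟩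

theorem noCross_singleton :
    NoCross C [s] P ↔ ¬ IsAbsorbed C s P ∧ ∀ t, IsStart C t P → ¬ t ≤ s := by
  simp [NoCross]

@[simp] theorem reduced_cons :
    Reduced C (s :: P) ↔ Reduced C P ∧ ¬ IsAbsorbed C s P ∧ ∀ t, IsStart C t P → ¬ t ≤ s := by
  rw [← noCross_singleton]; rfl

theorem Reduced.congr (hC : IsCommutation C) (h : TraceEq C P Q) (hr : Reduced C P) :
    Reduced C Q := by
  induction h with
  | nil => exact hr
  | cons k h ih => exact ⟨ih hr.1, hr.2.congr hC (.refl _) h⟩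
  | @swap a b P hab =>
    have h1 := hC.symm hab
    have h2 := hC.not_le hab
    have h3 := hC.not_ge hab
    simp only [reduced_cons, isAbsorbed_cons, isStart_cons] at hr ⊢
    obtain ⟨⟨hP, hb, hb'⟩, ha, ha'⟩ := hr
    refine ⟨⟨hP, fun h => ha (Or.inr ⟨hab, h⟩), fun t ht hta => ha' t (Or.inr ⟨?_, ht⟩) hta⟩,
      fun h => hb (h.resolve_left h3).2, ?_⟩
    · exact hC.mono hta hab
    · rintro t (rfl | ⟨-, ht⟩) hle
      · exact h2 hle
      · exact hb' t ht hle
  | trans _ _ ih ih' => exact ih' (ih hr)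

theorem reduced_reverse_append :
    Reduced C (P.reverse ++ Q) ↔ Reduced C P ∧ Reduced C Q ∧ NoCross C P Q := by
  induction P generalizing Q with
  | nil => simp [Reduced, NoCross]
  | cons h P ih =>
    rw [List.reverse_cons, List.append_assoc, List.singleton_append, ih, reduced_cons,
      reduced_cons]
    simp only [NoCross, isStart_cons, isAbsorbed_cons]
    grind

theorem Reduced.reverse (h : Reduced C P) : Reduced C P.reverse := by
  have := reduced_reverse_append (C := C) (P := P) (Q := [])
  rw [List.append_nil] at this
  exact this.2 ⟨h, trivial, by simp [NoCross]⟩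

theorem reduced_append :
    Reduced C (P ++ Q) ↔ Reduced C P ∧ Reduced C Q ∧ NoCross C P.reverse Q := by
  have := reduced_reverse_append (C := C) (P := P.reverse) (Q := Q)
  rw [List.reverse_reverse] at this
  rw [this]
  refine and_congr_left fun _ => ⟨fun h => ?_, fun h => h.reverse⟩
  simpa using h.reverse

/-- Lists of pairwise commuting elements with the same elements are equal up to commutation. -/
theorem traceEq_of_perm (hC : IsCommutation C) (h : P.Perm Q) (hP : P.Pairwise C) :
    TraceEq C P Q := by
  induction h with
  | nil => exact .nil
  | cons k _ ih => exact .cons k (ih (List.pairwise_cons.1 hP).2)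
  | swap a b P =>
    simp only [List.pairwise_cons, List.forall_mem_cons] at hP
    exact .swap P hP.1.1
  | trans h _ ih ih' => exact (ih hP).trans (ih' (hP.perm h hC.symm))

theorem traceEq_of_mem_iff (hC : IsCommutation C) (hP : P.Pairwise C) (hQ : Q.Pairwise C)
    (h : ∀ s, s ∈ P ↔ s ∈ Q) : TraceEq C P Q :=
  have nodup {R : List A} (hR : R.Pairwise C) : R.Nodup :=
    hR.imp fun {a b} hab (heq : a = b) => hC.irrefl b (by rwa [heq] at hab)
  traceEq_of_perm hC ((List.perm_ext_iff_of_nodup (nodup hP) (nodup hQ)).2 h) hP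

theorem IsStart.traceEq (hC : IsCommutation C) (h : IsStart C s P) :
    ∃ P', TraceEq C P (s :: P') := by
  obtain ⟨a, b, rfl, ha⟩ := reaches_iff.1 h
  exact ⟨a ++ b, traceEq_cons_append fun r hr => hC.symm (ha r hr)⟩

theorem TraceEq.erase (hC : IsCommutation C) [DecidableEq A] (h : TraceEq C P Q) (s : A) :
    TraceEq C (P.erase s) (Q.erase s) := by
  induction h with
  | nil => exact .refl _
  | @cons k P Q h ih =>
    simp only [List.erase_cons]
    split
    · exact h
    · exact .cons k ih
  | @swap a b P hab =>
    have hne : a ≠ b := fun h => hC.irrefl _ (h ▸ hab)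
    by_cases ha : a = s
    · subst ha
      simp [hne.symm, TraceEq.refl]
    · by_cases hb : b = s
      · subst hb
        simp [hne, TraceEq.refl]
      · simp only [List.erase_cons, beq_iff_eq, ha, hb, if_false]
        exact .swap _ hab
  | trans _ _ ih ih' => exact ih.trans ih'

theorem TraceEq.cancel_cons (hC : IsCommutation C) (h : TraceEq C (s :: P) (s :: Q)) :
    TraceEq C P Q := by
  classical
  simpa using h.erase hC s

/-- Split off the longest initial part whose elements satisfy `p`. -/
theorem exists_initial_part (hC : IsCommutation C) (p : A → Prop) (P : List A) :
    ∃ x P₁, TraceEq C P (x ++ P₁) ∧ (∀ s ∈ x, p s) ∧ ∀ s, IsStart C s P₁ → ¬ p s := by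
  induction hn : P.length using Nat.strong_induction_on generalizing P with
  | _ n ih =>
    by_cases h : ∃ s, IsStart C s P ∧ p s
    · obtain ⟨s, hs, hps⟩ := h
      obtain ⟨P', hP'⟩ := hs.traceEq hC
      have hlen := hP'.perm.length_eq
      rw [List.length_cons] at hlen
      obtain ⟨x, P₁, h1, h2, h3⟩ := ih P'.length (by omega) P' rfl
      exact ⟨s :: x, P₁, hP'.trans (.cons s h1), by simpa using ⟨hps, h2⟩, h3⟩
    · push Not at h
      exact ⟨[], P, .refl P, by simp, h⟩

theorem initial_part_unique (hC : IsCommutation C) (p : A → Prop) {x P₁ y Q₁ : List A}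
    (h : TraceEq C (x ++ P₁) (y ++ Q₁)) (hx : ∀ s ∈ x, p s) (hP : ∀ s, IsStart C s P₁ → ¬ p s)
    (hy : ∀ s ∈ y, p s) (hQ : ∀ s, IsStart C s Q₁ → ¬ p s) :
    TraceEq C x y ∧ TraceEq C P₁ Q₁ := by
  induction x generalizing y with
  | nil =>
    cases y with
    | nil => exact ⟨.nil, h⟩
    | cons k y =>
      exact absurd (hy k (by simp))
        (hP k (IsStart.congr hC (h.symm hC) (Or.inl rfl)))
  | cons s x ih =>
    simp only [List.forall_mem_cons] at hx
    have hs : IsStart C s (y ++ Q₁) := IsStart.congr hC h (Or.inl rfl)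
    rcases isStart_append.1 hs with hs | hs
    · obtain ⟨y', hy'⟩ := hs.traceEq hC
      obtain ⟨h1, h2⟩ := ih ((h.trans (hy'.append_right Q₁)).cancel_cons hC) hx.2
        (fun r hr => hy r (hy'.perm.mem_iff.2 (List.mem_cons_of_mem _ hr)))
      exact ⟨(TraceEq.cons s h1).trans (hy'.symm hC), h2⟩
    · exact absurd hx.1 (hQ s hs.2)

/-- Symmetric decomposition data for two lists facing each other at their starts. -/
structure IsDecomposition (C : A → A → Prop) (P Q w x P₁ y Q₁ : List A) : Prop where
  left : TraceEq C P (w ++ x ++ P₁)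
  right : TraceEq C Q (w ++ y ++ Q₁)
  pairwise : w.Pairwise C
  left_absorbed : ∀ s ∈ x, IsProperlyAbsorbed C s Q₁
  right_absorbed : ∀ s ∈ y, IsProperlyAbsorbed C s P₁
  comm_left : ∀ s ∈ x, ∀ t ∈ w, C s t
  comm_right : ∀ s ∈ y, ∀ t ∈ w, C s t
  comm : ∀ s ∈ x, ∀ t ∈ y, C s t
  reduced : Reduced C (P₁.reverse ++ (w ++ Q₁))

theorem comm_of_le_or_comm (hC : IsCommutation C) (h : ∀ r ∈ P, r ≤ s ∨ C r s)
    (hs : ∀ r, IsStart C r P → ¬ r ≤ s) : ∀ r ∈ P, C r s := by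
  induction P with
  | nil => simp
  | cons k P ih =>
    simp only [List.forall_mem_cons] at h ⊢
    have hk : C k s := h.1.resolve_left (hs k (Or.inl rfl))
    exact ⟨hk, ih h.2 fun r hr hle => hs r (Or.inr ⟨hC.mono hle (hC.symm hk), hr⟩) hle⟩

theorem isStart_of_mem_of_isStart (hC : IsCommutation C) (hP : Reduced C P)
    (h : ∀ r ∈ P, IsAbsorbed C r Q) (hs : s ∈ P) (hsQ : IsStart C s Q) : IsStart C s P := by
  induction P with
  | nil => simp at hs
  | cons k P ih =>
    rw [reduced_cons] at hP
    simp only [List.forall_mem_cons] at h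
    rcases List.mem_cons.1 hs with rfl | hs
    · exact Or.inl rfl
    have hs' := ih hP.1 h.2 hs
    rcases hsQ.le_or_comm hC h.1 with hle | hk
    · exact absurd ⟨s, hle, Reaches.mono hC hle hs'⟩ hP.2.1
    · exact Or.inr ⟨hC.symm hk, hs'⟩

theorem pairwise_comm_of_isStart (hC : IsCommutation C) (hP : Reduced C P)
    (h : ∀ r ∈ P, IsAbsorbed C r Q) :
    P.Pairwise fun a b => IsStart C a Q ∨ IsStart C b Q → C a b := by
  induction P with
  | nil => exact .nil
  | cons k P ih =>
    rw [reduced_cons] at hP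
    simp only [List.forall_mem_cons] at h
    refine .cons ?_ (ih hP.1 h.2)
    rintro b hb (hk | hbQ)
    · exact hC.symm
        (comm_of_le_or_comm hC (fun r hr => hk.le_or_comm hC (h.2 r hr)) hP.2.2 b hb)
    · refine (hbQ.le_or_comm hC h.1).resolve_left fun hle => hP.2.1 ⟨b, hle, ?_⟩
      exact Reaches.mono hC hle (isStart_of_mem_of_isStart hC hP.1 h.2 hb hbQ)

theorem comm_of_mem_of_isStart (hC : IsCommutation C) (hP : Reduced C P)
    (h : ∀ r ∈ P, IsAbsorbed C r Q) (hs : s ∈ P) (ht : t ∈ P) (htQ : IsStart C t Q)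
    (hst : s ≠ t) : C s t := by
  have hpw := pairwise_comm_of_isStart hC hP h
  let R (a b : A) : Prop := a ≠ b → (IsStart C a Q ∨ IsStart C b Q) → C a b
  have hR : ∀ ⦃a⦄, a ∈ P → ∀ ⦃b⦄, b ∈ P → R a b := by
    refine List.Pairwise.forall_of_forall_of_flip (fun a _ h => absurd rfl h) ?_ ?_
    · exact hpw.imp (S := R) (by intro a b h _; exact h)
    · exact hpw.imp (S := flip R) (by intro a b h _ h'; exact hC.symm (h h'.symm))
  exact hR hs ht hst (Or.inr htQ)

theorem traceEq_filter_append (hC : IsCommutation C) (p : A → Bool)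
    (h : P.Pairwise fun a b => p a ∨ p b → C a b) :
    TraceEq C P (P.filter p ++ P.filter fun a => !p a) := by
  induction P with
  | nil => exact .nil
  | cons k P ih =>
    rw [List.pairwise_cons] at h
    have ih := ih h.2
    by_cases hk : p k
    · simpa [hk] using TraceEq.cons k ih
    · have : TraceEq C (k :: (P.filter p ++ P.filter fun a => !p a))
          (P.filter p ++ k :: P.filter fun a => !p a) := by
        refine (traceEq_cons_append fun r hr => ?_).symm hC
        rw [List.mem_filter] at hr
        exact hC.symm (h.1 r hr.1 (Or.inr hr.2))
      simpa [hk] using (TraceEq.cons k ih).trans this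

/-- The properly absorbed parts on the two sides commute. -/
theorem comm_of_properly_absorbed (hC : IsCommutation C) {x P₁ y Q₁ : List A} {q : A}
    (hP : Reduced C (x ++ P₁)) (hx : ∀ s ∈ x, IsAbsorbed C s (y ++ Q₁))
    (hy : ∀ s ∈ y, IsAbsorbed C s (x ++ P₁)) (hs : s ∈ x)
    (hsQ : IsProperlyAbsorbed C s (y ++ Q₁)) (hq : q ∈ y)
    (hqP : IsProperlyAbsorbed C q (x ++ P₁)) : C s q := by
  obtain ⟨t, hst, ht⟩ := hsQ
  obtain ⟨r, hqr, hr⟩ := hqP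
  by_contra hsq
  have hqs : ¬ C q s := fun h => hsq (hC.symm h)
  have hrx : r ∈ x := (hr.comm_or_mem hs).resolve_left hqs
  have hty : t ∈ y := (ht.comm_or_mem hq).resolve_left hsq
  obtain ⟨t', hrt', ht'⟩ := hx r hrx
  obtain ⟨r', htr', hr'⟩ := hy t hty
  have eq_t : t = t' := by
    rcases ht.trichotomy ht' with h | h | h
    · exact h
    · exact absurd (hC.mono_right hqr.le (hC.mono_right hrt' h)) hsq
    · exact absurd (hC.mono hqr.le (hC.mono_right hst.le h)) hqs
  have eq_r : r = r' := by
    rcases hr.trichotomy hr' with h | h | h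
    · exact h
    · exact absurd (hC.mono_right hst.le (hC.mono_right htr' h)) hqs
    · exact absurd (hC.mono hst.le (hC.mono_right hqr.le h)) hsq
  subst eq_t eq_r
  obtain rfl := le_antisymm hrt' htr'
  exact hC.not_le
    (comm_of_mem_of_isStart hC (reduced_append.1 hP).1 hx hs hrx ht' hst.ne) hst.le

theorem comm_of_isStart_of_isAbsorbed (hC : IsCommutation C) {y P₁ Q₁ : List A}
    (hQ : Reduced C (y ++ Q₁)) (hy : ∀ q ∈ y, IsProperlyAbsorbed C q P₁)
    (hs : IsStart C s P₁) (hsQ : IsAbsorbed C s Q₁) : ∀ q ∈ y, C s q := by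
  induction y with
  | nil => simp
  | cons k y ih =>
    rw [List.cons_append, reduced_cons] at hQ
    simp only [List.forall_mem_cons] at hy ⊢
    have hyC := ih hQ.1 hy.2
    refine ⟨?_, hyC⟩
    obtain ⟨r, hkr, hr⟩ := hy.1
    rcases hr.trichotomy hs with rfl | h | h
    · exact absurd ((isAbsorbed_append.2 (Or.inr ⟨hyC, hsQ⟩)).mono hC hkr.le) hQ.2.1
    · exact hC.symm h
    · exact hC.mono_right hkr.le h

theorem IsDecomposition.symm (hC : IsCommutation C) {w x P₁ y Q₁ : List A}
    (h : IsDecomposition C P Q w x P₁ y Q₁) : IsDecomposition C Q P w y Q₁ x P₁ where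
  left := h.right
  right := h.left
  pairwise := h.pairwise
  left_absorbed := h.right_absorbed
  right_absorbed := h.left_absorbed
  comm_left := h.comm_right
  comm_right := h.comm_left
  comm s hs t ht := hC.symm (h.comm t ht s hs)
  reduced := by
    have h1 : TraceEq C w.reverse w :=
      (traceEq_of_perm hC w.reverse_perm.symm h.pairwise).symm hC
    have h2 := h.reduced.reverse
    simp only [List.reverse_append, List.reverse_reverse, List.append_assoc] at h2
    exact h2.congr hC ((h1.append_right P₁).append_left _)

theorem not_isAbsorbed_of_isStart (hC : IsCommutation C) {w P₁ y Q₁ : List A}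
    (hQ : Reduced C (w ++ y ++ Q₁)) (hy : ∀ q ∈ y, IsProperlyAbsorbed C q P₁)
    (hmax : ∀ s, IsStart C s P₁ → ¬ IsAbsorbed C s (w ++ y ++ Q₁)) :
    ∀ s, IsStart C s P₁ → ¬ IsAbsorbed C s (w ++ Q₁) := by
  intro s hs h
  refine hmax s hs ?_
  rw [List.append_assoc, isAbsorbed_append]
  rcases isAbsorbed_append.1 h with h | ⟨hw, h⟩
  · exact Or.inl h
  · refine Or.inr ⟨hw, isAbsorbed_append.2 (Or.inr ⟨?_, h⟩)⟩
    rw [List.append_assoc] at hQ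
    exact comm_of_isStart_of_isAbsorbed hC (reduced_append.1 hQ).2.1 hy hs h

theorem reduced_append_of_comm (hC : IsCommutation C) {w y Q₁ : List A}
    (hQ : Reduced C (w ++ y ++ Q₁)) (h : ∀ s ∈ y, ∀ t ∈ w, C s t) : Reduced C (w ++ Q₁) := by
  have := hQ.congr hC (((traceEq_append_comm h).symm hC).append_right Q₁)
  rw [List.append_assoc] at this
  exact (reduced_append.1 this).2.1

theorem exists_isDecomposition (hC : IsCommutation C) (hP : Reduced C P) (hQ : Reduced C Q) :
    ∃ w x P₁ y Q₁, IsDecomposition C P Q w x P₁ y Q₁ := by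
  classical
  obtain ⟨x, P₁, hPx, hx, hP₁⟩ := exists_initial_part hC (fun s => IsAbsorbed C s Q) P
  obtain ⟨y, Q₁, hQy, hy, hQ₁⟩ := exists_initial_part hC (fun s => IsAbsorbed C s P) Q
  replace hx : ∀ s ∈ x, IsAbsorbed C s (y ++ Q₁) := fun s hs => (hx s hs).congr hC hQy
  replace hP₁ : ∀ s, IsStart C s P₁ → ¬ IsAbsorbed C s (y ++ Q₁) :=
    fun s hs h => hP₁ s hs (h.congr hC (hQy.symm hC))
  replace hy : ∀ s ∈ y, IsAbsorbed C s (x ++ P₁) := fun s hs => (hy s hs).congr hC hPx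
  replace hQ₁ : ∀ s, IsStart C s Q₁ → ¬ IsAbsorbed C s (x ++ P₁) :=
    fun s hs h => hQ₁ s hs (h.congr hC (hPx.symm hC))
  replace hP := hP.congr hC hPx
  replace hQ := hQ.congr hC hQy
  have hPred := reduced_append.1 hP
  have hQred := reduced_append.1 hQ
  have hpx := pairwise_comm_of_isStart hC hPred.1 hx
  have hpy := pairwise_comm_of_isStart hC hQred.1 hy
  set w := x.filter fun s => decide (IsStart C s (y ++ Q₁)) with hw
  set x' := x.filter fun s => !decide (IsStart C s (y ++ Q₁)) with hx'
  set w' := y.filter fun s => decide (IsStart C s (x ++ P₁)) with hw'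
  set y' := y.filter fun s => !decide (IsStart C s (x ++ P₁)) with hy'
  have hxw : TraceEq C x (w ++ x') := traceEq_filter_append hC _ (by simpa using hpx)
  have hyw : TraceEq C y (w' ++ y') := traceEq_filter_append hC _ (by simpa using hpy)
  have hwC : w.Pairwise C := by
    rw [hw, List.pairwise_filter]
    exact hpx.imp fun h h1 _ => h (Or.inl (by simpa using h1))
  have hwC' : w'.Pairwise C := by
    rw [hw', List.pairwise_filter]
    exact hpy.imp fun h h1 _ => h (Or.inl (by simpa using h1))
  have hww : TraceEq C w' w := by
    refine traceEq_of_mem_iff hC hwC' hwC fun s => ?_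
    simp only [hw, hw', List.mem_filter, decide_eq_true_eq]
    constructor
    · rintro ⟨hs, hsP⟩
      have hsQ := (isStart_append (Q := Q₁)).2
        (Or.inl (isStart_of_mem_of_isStart hC hQred.1 hy hs hsP))
      refine ⟨?_, hsQ⟩
      exact ((isStart_append.1 hsP).resolve_right fun h => hP₁ s h.2 hsQ.isAbsorbed).mem
    · rintro ⟨hs, hsQ⟩
      have hsP := (isStart_append (Q := P₁)).2
        (Or.inl (isStart_of_mem_of_isStart hC hPred.1 hx hs hsQ))
      refine ⟨?_, hsP⟩
      exact ((isStart_append.1 hsQ).resolve_right fun h => hQ₁ s h.2 hsP.isAbsorbed).mem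
  replace hyw : TraceEq C y (w ++ y') := hyw.trans (hww.append_right y')
  have comm_left : ∀ s ∈ x', ∀ t ∈ w, C s t := by
    intro s hs t ht
    simp only [hw, hx', List.mem_filter, Bool.not_eq_true', decide_eq_true_eq,
      decide_eq_false_iff_not] at hs ht
    exact comm_of_mem_of_isStart hC hPred.1 hx hs.1 ht.1 ht.2 fun h => hs.2 (h ▸ ht.2)
  have comm_right : ∀ s ∈ y', ∀ t ∈ w, C s t := by
    intro s hs t ht
    replace ht := hww.perm.mem_iff.2 ht
    simp only [hw', hy', List.mem_filter, Bool.not_eq_true', decide_eq_true_eq,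
      decide_eq_false_iff_not] at hs ht
    exact comm_of_mem_of_isStart hC hQred.1 hy hs.1 ht.1 ht.2 fun h => hs.2 (h ▸ ht.2)
  have hx'Q : ∀ s ∈ x', s ∈ x ∧ IsProperlyAbsorbed C s (y ++ Q₁) := by
    intro s hs
    simp only [hx', List.mem_filter, Bool.not_eq_true', decide_eq_false_iff_not] at hs
    exact ⟨hs.1, (hx s hs.1).properly hs.2⟩
  have hy'P : ∀ s ∈ y', s ∈ y ∧ IsProperlyAbsorbed C s (x ++ P₁) := by
    intro s hs
    simp only [hy', List.mem_filter, Bool.not_eq_true', decide_eq_false_iff_not] at hs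
    exact ⟨hs.1, (hy s hs.1).properly hs.2⟩
  have comm : ∀ s ∈ x', ∀ t ∈ y', C s t := fun s hs t ht =>
    comm_of_properly_absorbed hC hP hx hy (hx'Q s hs).1 (hx'Q s hs).2 (hy'P t ht).1
      (hy'P t ht).2
  clear_value w x' y'
  replace hxw := hxw.append_right P₁
  replace hyw := hyw.append_right Q₁
  have left_absorbed : ∀ s ∈ x', IsProperlyAbsorbed C s Q₁ := fun s hs =>
    ((hx'Q s hs).2.congr hC hyw).of_append hC
      (List.forall_mem_append.2 ⟨comm_left s hs, comm s hs⟩)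
  have right_absorbed : ∀ s ∈ y', IsProperlyAbsorbed C s P₁ := fun s hs =>
    ((hy'P s hs).2.congr hC hxw).of_append hC
      (List.forall_mem_append.2 ⟨comm_right s hs, fun t ht => hC.symm (comm t ht s hs)⟩)
  replace hP := hP.congr hC hxw
  replace hQ := hQ.congr hC hyw
  have cross₁ := not_isAbsorbed_of_isStart hC hQ right_absorbed
    fun s hs h => hP₁ s hs (h.congr hC (hyw.symm hC))
  have cross₂ := not_isAbsorbed_of_isStart hC hP left_absorbed
    fun s hs h => hQ₁ s hs (h.congr hC (hxw.symm hC))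
  have hwP := reduced_append_of_comm hC hP comm_left
  refine ⟨w, x', P₁, y', Q₁, hPx.trans hxw, hQy.trans hyw, hwC, left_absorbed, right_absorbed,
    comm_left, comm_right, comm, reduced_reverse_append.2 ⟨hPred.2.1,
      reduced_append_of_comm hC hQ comm_right, cross₁, fun t ht htP => ?_⟩⟩
  rcases isStart_append.1 ht with ht | ⟨htw, ht⟩
  · refine (reduced_append.1 hwP).2.2.1 t ?_ htP
    exact isStart_of_mem_of_pairwise hC
      (hwC.perm w.reverse_perm.symm hC.symm) (List.mem_reverse.2 ht.mem)
  · exact cross₂ t ht (isAbsorbed_append.2 (Or.inr ⟨htw, htP⟩))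

variable {w x P₁ y Q₁ w' x' P₁' y' Q₁' : List A}

theorem IsDecomposition.isProperlyAbsorbed (hC : IsCommutation C)
    (h : IsDecomposition C P Q w x P₁ y Q₁) (hs : s ∈ x) : IsProperlyAbsorbed C s Q :=
  ((h.left_absorbed s hs).append_left
    (List.forall_mem_append.2 ⟨h.comm_left s hs, h.comm s hs⟩)).congr hC (h.right.symm hC)

theorem IsDecomposition.isStart (hC : IsCommutation C)
    (h : IsDecomposition C P Q w x P₁ y Q₁) (hs : s ∈ w) : IsStart C s Q := by
  refine IsStart.congr hC (h.right.symm hC) ?_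
  rw [List.append_assoc]
  exact isStart_append.2 (Or.inl (isStart_of_mem_of_pairwise hC h.pairwise hs))

theorem IsDecomposition.isAbsorbed (hC : IsCommutation C)
    (h : IsDecomposition C P Q w x P₁ y Q₁) : ∀ s ∈ w ++ x, IsAbsorbed C s Q :=
  List.forall_mem_append.2 ⟨fun _ hs => (h.isStart hC hs).isAbsorbed,
    fun _ hs => (h.isProperlyAbsorbed hC hs).isAbsorbed⟩

theorem IsDecomposition.not_isAbsorbed (hC : IsCommutation C)
    (h : IsDecomposition C P Q w x P₁ y Q₁) (s : A) (hs : IsStart C s P₁) :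
    ¬ IsAbsorbed C s Q := by
  intro hsQ
  have hcross := (reduced_reverse_append.1 h.reduced).2.2.1 s hs
  rw [isAbsorbed_append, not_or, not_and] at hcross
  have := hsQ.congr hC h.right
  rw [List.append_assoc, isAbsorbed_append, isAbsorbed_append] at this
  rcases this with hw | ⟨hw, ⟨t, hst, ht⟩ | ⟨-, hQ⟩⟩
  · exact hcross.1 hw
  · obtain ⟨r, htr, hr⟩ := h.right_absorbed t ht.mem
    rcases hr.trichotomy hs with rfl | hts | hsr
    · exact lt_irrefl _ (htr.trans_le hst)
    · exact hC.not_ge hts hst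
    · exact hC.not_le hsr (hst.trans htr.le)
  · exact hcross.2 hw hQ

theorem IsDecomposition.unique_left (hC : IsCommutation C)
    (h : IsDecomposition C P Q w x P₁ y Q₁) (h' : IsDecomposition C P Q w' x' P₁' y' Q₁') :
    TraceEq C w w' ∧ TraceEq C x x' ∧ TraceEq C P₁ P₁' := by
  classical
  obtain ⟨h1, h2⟩ := initial_part_unique hC (fun s => IsAbsorbed C s Q)
    ((h.left.symm hC).trans h'.left) (h.isAbsorbed hC) (h.not_isAbsorbed hC)
    (h'.isAbsorbed hC) (h'.not_isAbsorbed hC)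
  have filter_w {w x P₁ y Q₁ : List A} (h : IsDecomposition C P Q w x P₁ y Q₁) :
      (w ++ x).filter (fun s => decide ¬ IsProperlyAbsorbed C s Q) = w := by
    rw [List.filter_append, List.filter_eq_self.2, List.filter_eq_nil_iff.2, List.append_nil]
    · exact fun s hs => by simpa using h.isProperlyAbsorbed hC hs
    · exact fun s hs => by simpa using (h.isStart hC hs).not_properlyAbsorbed hC
  have filter_x {w x P₁ y Q₁ : List A} (h : IsDecomposition C P Q w x P₁ y Q₁) :
      (w ++ x).filter (fun s => decide (IsProperlyAbsorbed C s Q)) = x := by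
    rw [List.filter_append, (List.filter_eq_nil_iff (l := w)).2, List.filter_eq_self.2,
        List.nil_append]
    · exact fun s hs => by simpa using h.isProperlyAbsorbed hC hs
    · exact fun s hs => by simpa using (h.isStart hC hs).not_properlyAbsorbed hC
  have hw := h1.filter fun s => decide ¬ IsProperlyAbsorbed C s Q
  have hx := h1.filter fun s => decide (IsProperlyAbsorbed C s Q)
  rw [filter_w h, filter_w h'] at hw
  rw [filter_x h, filter_x h'] at hx
  exact ⟨hw, hx, h2⟩

/-- The congruence generated by commutation and absorption. -/
inductive AbsorbEq (C : A → A → Prop) : List A → List A → Prop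
  | of_traceEq {P Q : List A} : TraceEq C P Q → AbsorbEq C P Q
  | cons (h : A) {P Q : List A} : AbsorbEq C P Q → AbsorbEq C (h :: P) (h :: Q)
  | absorb_left {s t : A} (P : List A) : s ≤ t → AbsorbEq C (s :: t :: P) (t :: P)
  | absorb_right {s t : A} (P : List A) : s ≤ t → AbsorbEq C (t :: s :: P) (t :: P)
  | trans {P Q R : List A} : AbsorbEq C P Q → AbsorbEq C Q R → AbsorbEq C P R

theorem AbsorbEq.append_left (P : List A) (h : AbsorbEq C Q R) :
    AbsorbEq C (P ++ Q) (P ++ R) := by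
  induction P with
  | nil => exact h
  | cons k P ih => exact .cons k ih

theorem IsAbsorbed.absorbEq_cons (h : IsAbsorbed C s P) : AbsorbEq C (s :: P) P := by
  induction P with
  | nil => exact absurd h not_isAbsorbed_nil
  | cons k P ih =>
    rcases isAbsorbed_cons.1 h with h | ⟨hk, h⟩
    · exact .absorb_left P h
    · exact (AbsorbEq.of_traceEq (.swap P hk)).trans (.cons k (ih h))

theorem absorbEq_append_of_isAbsorbed (h : ∀ s ∈ P, IsAbsorbed C s Q) :
    AbsorbEq C (P ++ Q) Q := by
  induction P with
  | nil => exact .of_traceEq (.refl Q)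
  | cons k P ih =>
    simp only [List.forall_mem_cons] at h
    exact (AbsorbEq.cons k (ih h.2)).trans h.1.absorbEq_cons

theorem IsAbsorbed.absorbEq_reverse_append (hC : IsCommutation C) (h : IsAbsorbed C s P)
    (R : List A) : AbsorbEq C (P.reverse ++ s :: R) (P.reverse ++ R) := by
  induction P generalizing R with
  | nil => exact absurd h not_isAbsorbed_nil
  | cons k P ih =>
    simp only [List.reverse_cons, List.append_assoc, List.singleton_append]
    rcases isAbsorbed_cons.1 h with h | ⟨hk, h⟩
    · exact (AbsorbEq.absorb_right R h).append_left _
    · exact (AbsorbEq.of_traceEq ((TraceEq.swap R (hC.symm hk)).append_left _)).trans (ih h _)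

theorem absorbEq_reverse_append_of_isAbsorbed (hC : IsCommutation C)
    (h : ∀ s ∈ Q, IsAbsorbed C s P) (R : List A) :
    AbsorbEq C (P.reverse ++ (Q ++ R)) (P.reverse ++ R) := by
  induction Q with
  | nil => exact .of_traceEq (.refl _)
  | cons k Q ih =>
    simp only [List.forall_mem_cons] at h
    exact (h.1.absorbEq_reverse_append hC _).trans (ih h.2)

/-- What remains of `P` after removing an initial part absorbed by `s`. -/
noncomputable def residue (hC : IsCommutation C) (s : A) (P : List A) : List A :=
  (exists_initial_part hC (· ≤ s) P).choose_spec.choose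

theorem residue_spec (hC : IsCommutation C) (s : A) (P : List A) :
    ∃ x, TraceEq C P (x ++ residue hC s P) ∧ (∀ r ∈ x, r ≤ s) ∧
      ∀ r, IsStart C r (residue hC s P) → ¬ r ≤ s :=
  ⟨_, (exists_initial_part hC (· ≤ s) P).choose_spec.choose_spec⟩

theorem residue_traceEq (hC : IsCommutation C) (h : TraceEq C P (x ++ P₁))
    (hx : ∀ r ∈ x, r ≤ s) (hP₁ : ∀ r, IsStart C r P₁ → ¬ r ≤ s) :
    TraceEq C (residue hC s P) P₁ := by
  obtain ⟨y, h1, h2, h3⟩ := residue_spec hC s P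
  exact (initial_part_unique hC (· ≤ s) ((h1.symm hC).trans h) h2 h3 hx hP₁).2

open Classical in
/-- Left multiplication of a reduced list by an element, followed by reduction. -/
noncomputable def absorbCons (hC : IsCommutation C) (s : A) (P : List A) : List A :=
  if IsAbsorbed C s P then P else s :: residue hC s P

theorem absorbCons_of_isAbsorbed (hC : IsCommutation C) (h : IsAbsorbed C s P) :
    absorbCons hC s P = P :=
  if_pos h

theorem absorbCons_of_not_isAbsorbed (hC : IsCommutation C) (h : ¬ IsAbsorbed C s P) :
    absorbCons hC s P = s :: residue hC s P :=
  if_neg h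

theorem absorbCons_congr (hC : IsCommutation C) (h : TraceEq C P Q) (s : A) :
    TraceEq C (absorbCons hC s P) (absorbCons hC s Q) := by
  by_cases hs : IsAbsorbed C s P
  · rwa [absorbCons_of_isAbsorbed hC hs, absorbCons_of_isAbsorbed hC (hs.congr hC h)]
  · rw [absorbCons_of_not_isAbsorbed hC hs,
      absorbCons_of_not_isAbsorbed hC fun h' => hs (h'.congr hC (h.symm hC))]
    obtain ⟨y, h1, h2, h3⟩ := residue_spec hC s Q
    exact .cons s (residue_traceEq hC (h.trans h1) h2 h3)

theorem isAbsorbed_absorbCons_iff (hC : IsCommutation C) (h : C s t) :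
    IsAbsorbed C s (absorbCons hC t P) ↔ IsAbsorbed C s P := by
  by_cases ht : IsAbsorbed C t P
  · rw [absorbCons_of_isAbsorbed hC ht]
  · rw [absorbCons_of_not_isAbsorbed hC ht]
    obtain ⟨x, h1, h2, -⟩ := residue_spec hC t P
    have hx : ∀ r ∈ x, C s r := fun r hr => hC.mono_right (h2 r hr) h
    have hP : IsAbsorbed C s P ↔ IsAbsorbed C s (x ++ residue hC t P) :=
      ⟨fun h => h.congr hC h1, fun h => h.congr hC (h1.symm hC)⟩
    rw [hP, isAbsorbed_cons, isAbsorbed_append]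
    have hxs : ¬ IsAbsorbed C s x := fun ⟨r, hr, hr'⟩ => hC.not_le (hx r hr'.mem) hr
    have := hC.not_le h
    tauto

theorem exists_residue_residue (hC : IsCommutation C) (h : C s t) (P : List A) :
    ∃ z, TraceEq C P (z ++ residue hC s (residue hC t P)) ∧ (∀ r ∈ z, r ≤ s ∨ r ≤ t) ∧
      ∀ r, IsStart C r (residue hC s (residue hC t P)) → ¬ (r ≤ s ∨ r ≤ t) := by
  obtain ⟨x, hx1, hx2, hx3⟩ := residue_spec hC t P
  obtain ⟨y, hy1, hy2, hy3⟩ := residue_spec hC s (residue hC t P)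
  refine ⟨x ++ y, ?_, ?_, ?_⟩
  · rw [List.append_assoc]
    exact hx1.trans (hy1.append_left x)
  · exact List.forall_mem_append.2 ⟨fun r hr => Or.inr (hx2 r hr), fun r hr => Or.inl (hy2 r hr)⟩
  · rintro r hr (hrs | hrt)
    · exact hy3 r hr hrs
    · refine hx3 r (IsStart.congr hC (hy1.symm hC) (isStart_append.2 (Or.inr ⟨?_, hr⟩))) hrt
      exact fun a ha => hC.mono hrt (hC.mono_right (hy2 a ha) (hC.symm h))

theorem absorbCons_absorbCons_of_not_isAbsorbed (hC : IsCommutation C) (h : C s t)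
    (hs : ¬ IsAbsorbed C s P) (ht : ¬ IsAbsorbed C t P) :
    TraceEq C (absorbCons hC s (absorbCons hC t P))
      (s :: t :: residue hC s (residue hC t P)) := by
  rw [absorbCons_of_not_isAbsorbed hC ((isAbsorbed_absorbCons_iff hC h).not.2 hs),
    absorbCons_of_not_isAbsorbed hC ht]
  obtain ⟨y, hy1, hy2, hy3⟩ := residue_spec hC s (residue hC t P)
  refine .cons s (residue_traceEq hC (x := y) ?_ hy2 ?_)
  · refine (TraceEq.cons t hy1).trans ((traceEq_cons_append fun r hr => ?_).symm hC)
    exact hC.mono (hy2 r hr) h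
  · rintro r (rfl | ⟨-, hr⟩) hle
    · exact hC.not_ge h hle
    · exact hy3 r hr hle

theorem absorbCons_comm (hC : IsCommutation C) (h : C s t) (P : List A) :
    TraceEq C (absorbCons hC s (absorbCons hC t P)) (absorbCons hC t (absorbCons hC s P)) := by
  have h' := hC.symm h
  by_cases hs : IsAbsorbed C s P
  · rw [absorbCons_of_isAbsorbed hC ((isAbsorbed_absorbCons_iff hC h).2 hs),
      absorbCons_of_isAbsorbed hC hs]
    exact .refl _
  by_cases ht : IsAbsorbed C t P
  · rw [absorbCons_of_isAbsorbed hC ((isAbsorbed_absorbCons_iff hC h').2 ht),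
      absorbCons_of_isAbsorbed hC ht]
    exact .refl _
  refine (absorbCons_absorbCons_of_not_isAbsorbed hC h hs ht).trans
    (TraceEq.trans ?_ ((absorbCons_absorbCons_of_not_isAbsorbed hC h' ht hs).symm hC))
  refine (TraceEq.swap _ h).trans (.cons t (.cons s ?_))
  obtain ⟨z, hz1, hz2, hz3⟩ := exists_residue_residue hC h P
  obtain ⟨z', hz1', hz2', hz3'⟩ := exists_residue_residue hC h' P
  exact (initial_part_unique hC (fun r => r ≤ s ∨ r ≤ t) ((hz1.symm hC).trans hz1') hz2 hz3
    (fun r hr => (hz2' r hr).symm) fun r hr hr' => hz3' r hr hr'.symm).2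

theorem absorbCons_absorbCons_of_le (hC : IsCommutation C) (h : s ≤ t) (P : List A) :
    absorbCons hC s (absorbCons hC t P) = absorbCons hC t P := by
  apply absorbCons_of_isAbsorbed
  by_cases ht : IsAbsorbed C t P
  · rw [absorbCons_of_isAbsorbed hC ht]
    exact ht.mono hC h
  · rw [absorbCons_of_not_isAbsorbed hC ht, isAbsorbed_cons]
    exact Or.inl h

theorem absorbCons_absorbCons_of_ge (hC : IsCommutation C) (h : s ≤ t) (P : List A) :
    TraceEq C (absorbCons hC t (absorbCons hC s P)) (absorbCons hC t P) := by
  by_cases hst : t ≤ s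
  · obtain rfl := le_antisymm h hst
    rw [absorbCons_absorbCons_of_le hC le_rfl]
    exact .refl _
  by_cases hs : IsAbsorbed C s P
  · rw [absorbCons_of_isAbsorbed hC hs]
    exact .refl _
  have ht : ¬ IsAbsorbed C t P := fun ht => hs (ht.mono hC h)
  have ht' : ¬ IsAbsorbed C t (absorbCons hC s P) := by
    rw [absorbCons_of_not_isAbsorbed hC hs, isAbsorbed_cons]
    rintro (h' | ⟨h', -⟩)
    · exact hst h'
    · exact hC.not_ge h' h
  rw [absorbCons_of_not_isAbsorbed hC ht, absorbCons_of_not_isAbsorbed hC ht',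
    absorbCons_of_not_isAbsorbed hC hs]
  obtain ⟨x, hx1, hx2, -⟩ := residue_spec hC s P
  obtain ⟨y, hy1, hy2, hy3⟩ := residue_spec hC t (residue hC s P)
  refine .cons t (TraceEq.trans (Q := residue hC t (residue hC s P)) ?_
    ((residue_traceEq hC (x := x ++ y) ?_ ?_ hy3).symm hC))
  · exact residue_traceEq hC (x := s :: y) (.cons s hy1) (List.forall_mem_cons.2 ⟨h, hy2⟩) hy3
  · rw [List.append_assoc]
    exact hx1.trans (hy1.append_left x)
  · exact List.forall_mem_append.2 ⟨fun r hr => (hx2 r hr).trans h, hy2⟩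

/-- The reduced form of a list under commutation and absorption. -/
noncomputable def reduct (hC : IsCommutation C) (P : List A) : List A :=
  P.foldr (absorbCons hC) []

theorem reduct_traceEq_of_reduced (hC : IsCommutation C) (h : Reduced C P) :
    TraceEq C (reduct hC P) P := by
  induction P with
  | nil => exact .nil
  | cons k P ih =>
    rw [reduced_cons] at h
    refine (absorbCons_congr hC (ih h.1) k).trans ?_
    rw [absorbCons_of_not_isAbsorbed hC h.2.1]
    exact .cons k (residue_traceEq hC (x := []) (.refl _) (by simp) h.2.2)

theorem TraceEq.reduct (hC : IsCommutation C) (h : TraceEq C P Q) :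
    TraceEq C (reduct hC P) (reduct hC Q) := by
  induction h with
  | nil => exact .refl _
  | cons k _ ih => exact absorbCons_congr hC ih k
  | swap P h => exact absorbCons_comm hC h _
  | trans _ _ ih ih' => exact ih.trans ih'

theorem AbsorbEq.reduct (hC : IsCommutation C) (h : AbsorbEq C P Q) :
    TraceEq C (reduct hC P) (reduct hC Q) := by
  induction h with
  | of_traceEq h => exact h.reduct hC
  | cons k _ ih => exact absorbCons_congr hC ih k
  | absorb_left P h =>
    simp only [_root_.reduct, List.foldr_cons]
    rw [absorbCons_absorbCons_of_le hC h]
    exact .refl _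
  | absorb_right P h => exact absorbCons_absorbCons_of_ge hC h _
  | trans _ _ ih ih' => exact ih.trans ih'

theorem IsDecomposition.absorbEq (hC : IsCommutation C)
    (h : IsDecomposition C P Q w x P₁ y Q₁) :
    AbsorbEq C (P.reverse ++ Q) (P₁.reverse ++ w ++ Q₁) := by
  have hw : TraceEq C w.reverse w :=
    (traceEq_of_perm hC w.reverse_perm.symm h.pairwise).symm hC
  have hP := (h.left.reverse fun _ _ => hC.symm).append h.right
  simp only [List.reverse_append, List.append_assoc] at hP
  have hyP : ∀ s ∈ y, IsAbsorbed C s (w ++ P₁) := fun s hs =>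
    ((h.right_absorbed s hs).append_left (h.comm_right s hs)).isAbsorbed
  refine (AbsorbEq.of_traceEq hP).trans ?_
  have h1 : AbsorbEq C (w.reverse ++ (w ++ (y ++ Q₁))) (w ++ (y ++ Q₁)) :=
    absorbEq_append_of_isAbsorbed fun s hs => isAbsorbed_append.2
      (Or.inl (isStart_of_mem_of_pairwise hC h.pairwise (List.mem_reverse.1 hs)).isAbsorbed)
  have h2 : AbsorbEq C (x.reverse ++ (w ++ (y ++ Q₁))) (w ++ (y ++ Q₁)) :=
    absorbEq_append_of_isAbsorbed fun s hs => by
      rw [← List.append_assoc]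
      exact ((h.left_absorbed s (List.mem_reverse.1 hs)).append_left (List.forall_mem_append.2
        ⟨h.comm_left s (List.mem_reverse.1 hs), h.comm s (List.mem_reverse.1 hs)⟩)).isAbsorbed
  refine ((h1.append_left _).append_left _).trans ((h2.append_left _).trans ?_)
  have h3 := absorbEq_reverse_append_of_isAbsorbed hC hyP Q₁
  simp only [List.reverse_append, List.append_assoc] at h3 ⊢
  refine (AbsorbEq.of_traceEq (((hw.symm hC).append_right _).append_left _)).trans (h3.trans ?_)
  exact .of_traceEq ((hw.append_right _).append_left _)

end Trace

section Words

instance (G : SimpleGraph V) : PartialOrder (Letter G) :=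
  PartialOrder.lift Subtype.val Subtype.val_injective

theorem isCommutation_lCommute (G : SimpleGraph V) : IsCommutation (LCommute G) where
  symm {s t} h := by rwa [LCommute, Finset.union_comm] at h
  irrefl s h := h (by rw [Finset.union_self]; exact s.2)
  mono {s t r} hle h := by
    intro hsr
    apply h
    have hle : s.1 ⊆ t.1 := hle
    have hunion : t.1 ∪ r.1 = t.1 ∪ (s.1 ∪ r.1) := by
      rw [← Finset.union_assoc, Finset.union_eq_left.2 hle]
    rw [hunion, IsLetter, Finset.coe_union]
    obtain ⟨⟨a, ha⟩⟩ := SimpleGraph.Connected.nonempty s.2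
    exact SimpleGraph.induce_union_connected
      (SimpleGraph.Connected.preconnected t.2) (SimpleGraph.Connected.preconnected hsr)
      ⟨a, hle ha, Finset.mem_union_left _ ha⟩

variable {G : SimpleGraph V} {u v : Word G}

theorem wEquiv_iff : WEquiv G u v ↔ TraceEq (LCommute G) u v := by
  constructor
  · intro h
    induction h with
    | refl => exact .refl _
    | tail _ h ih =>
      obtain ⟨a, b, s, t, hst, rfl, rfl⟩ := h
      exact ih.trans ((TraceEq.swap b hst).append_left a)
  · intro h
    induction h with
    | nil => exact .refl
    | cons k _ ih =>
      refine Relation.ReflTransGen.lift (r := LSwapStep G) (p := LSwapStep G) (k :: ·) ?_ _ _ ih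
      rintro _ _ ⟨a, b, s, t, hst, rfl, rfl⟩
      exact ⟨k :: a, b, s, t, hst, rfl, rfl⟩
    | @swap s t P hst => exact .single ⟨[], P, s, t, hst, rfl, rfl⟩
    | trans _ _ ih ih' => exact Relation.ReflTransGen.trans ih ih'

theorem wIsReduced_iff : WIsReduced G u ↔ Reduced (LCommute G) u := by
  rw [WIsReduced]
  induction u with
  | nil => simp [Reduced]
  | cons k u ih =>
    rw [reduced_cons, ← ih]
    constructor
    · refine fun h => ⟨?_, ?_, ?_⟩
      · rintro ⟨a, b, c, s, t, rfl, hst⟩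
        exact h ⟨k :: a, b, c, s, t, rfl, hst⟩
      · rintro ⟨t, hkt, ht⟩
        obtain ⟨b, c, rfl, hb⟩ := reaches_iff.1 ht
        exact h ⟨[], b, c, k, t, rfl, Or.inl ⟨hkt, hb⟩⟩
      · intro t ht htk
        obtain ⟨b, c, rfl, hb⟩ := reaches_iff.1 ht
        exact h ⟨[], b, c, k, t, rfl, Or.inr ⟨htk, hb⟩⟩
    · rintro ⟨h, hk, hk'⟩ ⟨a, b, c, s, t, hu, hst⟩
      cases a with
      | nil =>
        simp only [List.nil_append, List.cons.injEq] at hu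
        obtain ⟨rfl, rfl⟩ := hu
        rcases hst with ⟨hle, hb⟩ | ⟨hle, hb⟩
        · exact hk ⟨t, hle, reaches_iff.2 ⟨b, c, rfl, hb⟩⟩
        · exact hk' t (reaches_iff.2 ⟨b, c, rfl, hb⟩) hle
      | cons l a =>
        simp only [List.cons_append, List.cons.injEq] at hu
        exact h ⟨a, b, c, s, t, hu.2, hst⟩

theorem letterProperLeftAbsorbed_iff {t : Letter G} :
    LetterProperLeftAbsorbed G t u ↔ IsProperlyAbsorbed (LCommute G) t u := by
  simp only [IsProperlyAbsorbed, reaches_iff]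
  constructor
  · rintro ⟨a, b, s, rfl, hts, ha⟩
    exact ⟨s, hts, a, b, rfl, ha⟩
  · rintro ⟨s, hts, a, b, rfl, ha⟩
    exact ⟨a, b, s, rfl, hts, ha⟩

theorem letterProperRightAbsorbed_iff {t : Letter G} :
    LetterProperRightAbsorbed G t u ↔ IsProperlyAbsorbed (LCommute G) t u.reverse := by
  rw [← letterProperLeftAbsorbed_iff]
  constructor
  · rintro ⟨a, b, s, rfl, hts, hb⟩
    exact ⟨b.reverse, a.reverse, s, by simp, hts, by simpa using hb⟩
  · rintro ⟨a, b, s, hu, hts, ha⟩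
    exact ⟨b.reverse, a.reverse, s, by rw [← u.reverse_reverse, hu]; simp, hts,
      by simpa using ha⟩

theorem absorbEq_of_reflTransGen (h : Relation.ReflTransGen (NSStep G) u v) :
    AbsorbEq (LCommute G) u v := by
  induction h with
  | refl => exact .of_traceEq (.refl _)
  | tail _ h ih =>
    refine ih.trans ?_
    rcases h with h | ⟨a, b, s, t, hst, rfl | rfl, rfl⟩
    · exact .of_traceEq (wEquiv_iff.1 (.single h))
    · exact (AbsorbEq.absorb_left b hst).append_left a
    · exact (AbsorbEq.absorb_right b hst).append_left a

theorem isDecomposition_iff {u₁ u' w v' v₁ : Word G} :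
    IsDecomposition (LCommute G) u.reverse v w u'.reverse u₁.reverse v' v₁ ↔
      WEquiv G u (u₁ ++ u' ++ w) ∧ WEquiv G v (w ++ v' ++ v₁) ∧ IsCommuting G w ∧
      ProperLeftAbsorbed G u' v₁ ∧ ProperRightAbsorbed G v' u₁ ∧
      WCommute G u' w ∧ WCommute G u' v' ∧ WCommute G w v' ∧
      WIsReduced G (u₁ ++ w ++ v₁) := by
  have hC := isCommutation_lCommute G
  have hw (hw : IsCommuting G w) : TraceEq (LCommute G) w w.reverse :=
    traceEq_of_perm hC w.reverse_perm.symm hw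
  constructor
  · intro h
    refine ⟨?_, wEquiv_iff.2 h.right, h.pairwise, ?_, ?_, ?_, ?_, ?_, ?_⟩
    · have := h.left.reverse fun _ _ => hC.symm
      simp only [List.reverse_append, List.reverse_reverse, ← List.append_assoc] at this
      exact wEquiv_iff.2 (this.trans (((hw h.pairwise).symm hC).append_left _))
    · exact fun s hs => letterProperLeftAbsorbed_iff.2
        (h.left_absorbed s (List.mem_reverse.2 hs))
    · exact fun s hs => letterProperRightAbsorbed_iff.2 (h.right_absorbed s hs)
    · exact fun s hs => h.comm_left s (List.mem_reverse.2 hs)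
    · exact fun s hs => h.comm s (List.mem_reverse.2 hs)
    · exact fun s hs t ht => hC.symm (h.comm_right t ht s hs)
    · have := h.reduced
      rwa [List.reverse_reverse, ← List.append_assoc, ← wIsReduced_iff] at this
  · rintro ⟨h1, h2, h3, h4, h5, h6, h7, h8, h9⟩
    refine ⟨?_, wEquiv_iff.1 h2, h3, ?_, ?_, ?_, ?_, ?_, ?_⟩
    · have := (wEquiv_iff.1 h1).reverse fun _ _ => hC.symm
      simp only [List.reverse_append, ← List.append_assoc] at this
      exact this.trans ((((hw h3).symm hC).append_right _).append_right _)
    · exact fun s hs => letterProperLeftAbsorbed_iff.1 (h4 s (List.mem_reverse.1 hs))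
    · exact fun s hs => letterProperRightAbsorbed_iff.1 (h5 s hs)
    · exact fun s hs => h6 s (List.mem_reverse.1 hs)
    · exact fun s hs t ht => hC.symm (h8 t ht s hs)
    · exact fun s hs => h7 s (List.mem_reverse.1 hs)
    · rwa [List.reverse_reverse, ← List.append_assoc, ← wIsReduced_iff]

end Words

/-- Symmetric Decomposition Lemma: given reduced words `u` and `v`, there are
decompositions, unique up to permutation, `u ≈ u₁·u'·w` and `v ≈ w·v'·v₁` such
that `w` is commuting, `u'` is properly left-absorbed by `v₁`, `v'` is properly
right-absorbed by `u₁`, the words `u'`, `w`, `v'` pairwise commute, and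
`u₁·w·v₁` is reduced; moreover `[u·v] ≈ u₁·w·v₁`. -/
theorem symmetric_decomposition (G : SimpleGraph V) (u v : Word G)
    (hu : WIsReduced G u) (hv : WIsReduced G v) :
    ∃ u1 u' w v' v1 : Word G,
      WEquiv G u (u1 ++ u' ++ w) ∧ WEquiv G v (w ++ v' ++ v1) ∧
      IsCommuting G w ∧
      ProperLeftAbsorbed G u' v1 ∧ ProperRightAbsorbed G v' u1 ∧
      WCommute G u' w ∧ WCommute G u' v' ∧ WCommute G w v' ∧
      WIsReduced G (u1 ++ w ++ v1) ∧
      (∀ r, NSRed G (u ++ v) r → WEquiv G r (u1 ++ w ++ v1)) ∧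
      (∀ u1' u'' w' v'' v1' : Word G,
        (WEquiv G u (u1' ++ u'' ++ w') ∧ WEquiv G v (w' ++ v'' ++ v1') ∧
         IsCommuting G w' ∧
         ProperLeftAbsorbed G u'' v1' ∧ ProperRightAbsorbed G v'' u1' ∧
         WCommute G u'' w' ∧ WCommute G u'' v'' ∧ WCommute G w' v'' ∧
         WIsReduced G (u1' ++ w' ++ v1')) →
        WEquiv G u1 u1' ∧ WEquiv G u' u'' ∧ WEquiv G w w' ∧
          WEquiv G v' v'' ∧ WEquiv G v1 v1') := by
  have hC := isCommutation_lCommute G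
  obtain ⟨w, x, P₁, v', v₁, h⟩ := exists_isDecomposition hC
    (wIsReduced_iff.1 hu).reverse (wIsReduced_iff.1 hv)
  rw [← x.reverse_reverse, ← P₁.reverse_reverse] at h
  have hdec := isDecomposition_iff.1 h
  obtain ⟨h1, h2, h3, h4, h5, h6, h7, h8, h9⟩ := hdec
  refine ⟨P₁.reverse, x.reverse, w, v', v₁, h1, h2, h3, h4, h5, h6, h7, h8, h9, ?_, ?_⟩
  · rintro r ⟨hr, hred⟩
    have hz := h.absorbEq hC
    simp only [List.reverse_reverse] at hz
    refine wEquiv_iff.2 (((reduct_traceEq_of_reduced hC (wIsReduced_iff.1 hred)).symm hC).trans ?_)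
    refine (((absorbEq_of_reflTransGen hr).reduct hC).symm hC).trans ((hz.reduct hC).trans ?_)
    exact reduct_traceEq_of_reduced hC (wIsReduced_iff.1 h9)
  · intro u1' u'' w' v'' v1' h'
    have h' := isDecomposition_iff.2 h'
    obtain ⟨hw, hx, hP⟩ := h.unique_left hC h'
    obtain ⟨-, hy, hQ⟩ := (h.symm hC).unique_left hC (h'.symm hC)
    have hx := hx.reverse fun _ _ => hC.symm
    have hP := hP.reverse fun _ _ => hC.symm
    simp only [List.reverse_reverse] at hx hP
    exact ⟨wEquiv_iff.2 hP, wEquiv_iff.2 hx, wEquiv_iff.2 hw, wEquiv_iff.2 hy, wEquiv_iff.2 hQ⟩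
end
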